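/- The number α₇ = √15 · ln((√15 − 1)/(√15 + 1)) has irrationality measure at most 5.45249; that is, for every real κ > 5.45249, there exist only finitely many pairs (p, q) with p ∈ ℤ and q a positive integer such that |α₇ − p/q| < q^(−κ). -/

import Mathlib

open MeasureTheory Filter Topology

open MeasureTheory Filter Topology

/-- bounded function `ψ(e^u)e^{-u} - 1` -/
noncomputable def pntF (u : ℝ) : ℝ := Chebyshev.psi (Real.exp u) * Real.exp (-u) - 1

lemma pnt_lseries : ∃ g : ℂ → ℂ, ContinuousOn g {s | 1 ≤ s.re} ∧
    ∀ s : ℂ, 1 < s.re →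
      LSeries (fun n ↦ ((ArithmeticFunction.vonMangoldt n : ℝ) : ℂ)) s = g s + 1 / (s - 1) := by
  refine ⟨ArithmeticFunction.vonMangoldt.LFunctionResidueClassAux (q := 1) 1,
    ArithmeticFunction.vonMangoldt.continuousOn_LFunctionResidueClassAux 1, fun s hs ↦ ?_⟩
  have h := ArithmeticFunction.vonMangoldt.eqOn_LFunctionResidueClassAux (q := 1) (a := 1)
    isUnit_one hs
  have h2 : ArithmeticFunction.vonMangoldt.residueClass (1 : ZMod 1) =
      fun n ↦ ArithmeticFunction.vonMangoldt n := by
    ext n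
    simp only [ArithmeticFunction.vonMangoldt.residueClass]
    rw [Set.indicator_of_mem]
    exact Subsingleton.elim _ _
  simp only [h2] at h
  rw [h]
  simp

lemma pnt_psi_bound {x : ℝ} (hx : 0 ≤ x) : Chebyshev.psi x ≤ 6 * x := by
  refine (Chebyshev.psi_le_const_mul_self hx).trans ?_
  have : Real.log 4 ≤ 2 := by
    have h : Real.log 4 = 2 * Real.log 2 := by
      rw [show (4:ℝ) = 2 ^ 2 by norm_num, Real.log_pow]; norm_num
    have := Real.log_two_lt_d9
    linarith
  nlinarith

lemma pntF_abs (u : ℝ) : |pntF u| ≤ 6 := by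
  unfold pntF
  have h0 := Chebyshev.psi_nonneg (Real.exp u)
  have h1 := pnt_psi_bound (Real.exp_pos u).le
  have h2 : Real.exp u * Real.exp (-u) = 1 := by rw [← Real.exp_add]; simp
  have h3 := Real.exp_pos (-u)
  rw [abs_le]
  constructor
  · nlinarith [mul_nonneg h0 h3.le]
  · nlinarith

lemma pntF_meas : Measurable pntF := by
  unfold pntF
  have := Chebyshev.psi_mono.measurable
  fun_prop

lemma pnt_laplace : ∃ g : ℂ → ℂ, ContinuousOn g {s | 1 ≤ s.re} ∧
    ∀ s : ℂ, 1 < s.re →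
      ∫ u in Set.Ioi (0:ℝ), (pntF u : ℂ) * Complex.exp (-(s - 1) * u) = g s := by
  obtain ⟨g, hg, hL⟩ := pnt_lseries
  refine ⟨fun s ↦ (g s - 1) / s, ?_, fun s hs ↦ ?_⟩
  · refine (hg.sub continuousOn_const).div continuousOn_id ?_
    intro s hs h
    have h' : s = 0 := h
    have hs' : 1 ≤ s.re := hs
    rw [h'] at hs'
    norm_num at hs'
  have hs0 : s ≠ 0 := by rintro rfl; norm_num at hs
  have hs1 : s - 1 ≠ 0 := by
    intro h
    rw [sub_eq_zero.mp h] at hs; norm_num at hs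
  have hsum : ∀ t : ℝ, ∑ k ∈ Finset.Icc 1 ⌊t⌋₊, ArithmeticFunction.vonMangoldt k
      = Chebyshev.psi t := by
    intro t
    rw [Chebyshev.psi_eq_sum_Icc]
    refine Finset.sum_subset ?_ ?_
    · intro x; simp
    · intro x hx hx'
      have : x = 0 := by simp at hx hx'; omega
      simp [this]
  have h1 := LSeries_eq_mul_integral_of_nonneg (fun n ↦ ArithmeticFunction.vonMangoldt n)
    (r := 1) zero_le_one hs ?_ (fun n ↦ ArithmeticFunction.vonMangoldt_nonneg)
  swap
  · refine Asymptotics.IsBigO.of_bound 6 (Eventually.of_forall fun n ↦ ?_)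
    have := hsum n
    rw [Nat.floor_natCast] at this
    rw [this, Real.norm_of_nonneg (Chebyshev.psi_nonneg _), Real.rpow_one,
      Real.norm_of_nonneg (Nat.cast_nonneg _)]
    exact pnt_psi_bound (Nat.cast_nonneg _)
  rw [hL s hs] at h1
  have h2 : ∫ t in Set.Ioi (1:ℝ), (t:ℂ) ^ (-s) = 1 / (s - 1) := by
    rw [integral_Ioi_cpow_of_lt (by simpa using hs) one_pos]
    have : -s + 1 ≠ 0 := by intro h; apply hs1; linear_combination -h
    simp
    field_simp
    ring
  have hi2 : IntegrableOn (fun t : ℝ ↦ (t:ℂ) ^ (-s)) (Set.Ioi 1) :=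
    integrableOn_Ioi_cpow_of_lt (by simpa using hs) one_pos
  have hcast : ∀ t : ℝ, ∑ k ∈ Finset.Icc 1 ⌊t⌋₊, ((ArithmeticFunction.vonMangoldt k : ℝ) : ℂ)
      = (Chebyshev.psi t : ℂ) := by
    intro t; rw [← hsum t]; push_cast; rfl
  simp only [hcast] at h1
  have hi1 : IntegrableOn (fun t : ℝ ↦ (Chebyshev.psi t : ℂ) * (t:ℂ) ^ (-(s+1))) (Set.Ioi 1) := by
    refine Integrable.mono' (g := fun t ↦ 6 * t ^ (-s.re)) ?_ ?_ ?_
    · exact (integrableOn_Ioi_rpow_of_lt (by simpa using hs) one_pos).const_mul _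
    · refine (AEStronglyMeasurable.mul ?_ ?_)
      · exact (Complex.measurable_ofReal.comp Chebyshev.psi_mono.measurable).aestronglyMeasurable
      · refine ContinuousOn.aestronglyMeasurable ?_ measurableSet_Ioi
        intro t ht
        refine ContinuousAt.continuousWithinAt ?_
        refine Complex.continuousAt_ofReal_cpow_const _ _ (Or.inr ?_)
        exact (zero_lt_one.trans ht).ne'
    · refine (ae_restrict_iff' measurableSet_Ioi).mpr (Eventually.of_forall fun t ht ↦ ?_)
      have ht0 : 0 < t := zero_lt_one.trans ht
      rw [norm_mul, Complex.norm_real, Real.norm_of_nonneg (Chebyshev.psi_nonneg _),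
        Complex.norm_cpow_eq_rpow_re_of_pos ht0]
      have : t ^ (-s.re) = t * t ^ (-(s+1)).re := by
        rw [← Real.rpow_one_add' ht0.le]
        · congr 1; simp
        · simp; linarith
      rw [this, ← mul_assoc]
      gcongr
      exact pnt_psi_bound ht0.le
  have h3 : ∫ t in Set.Ioi (1:ℝ), ((Chebyshev.psi t : ℂ) * (t:ℂ) ^ (-(s+1)) - (t:ℂ) ^ (-s))
      = (g s - 1) / s := by
    rw [integral_sub hi1 hi2, h2]
    have : ∫ t in Set.Ioi (1:ℝ), (Chebyshev.psi t : ℂ) * (t:ℂ) ^ (-(s+1)) =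
      (g s + 1 / (s - 1)) / s := by rw [h1]; field_simp
    rw [this]
    field_simp
    ring
  show _ = (g s - 1) / s
  rw [← h3]
  have himg : Real.exp '' Set.Ioi 0 = Set.Ioi 1 := by
    ext x
    simp only [Set.mem_image, Set.mem_Ioi]
    constructor
    · rintro ⟨y, hy, rfl⟩; exact Real.one_lt_exp_iff.mpr hy
    · intro hx; exact ⟨Real.log x, Real.log_pos hx, Real.exp_log (zero_lt_one.trans hx)⟩
  rw [← himg, integral_image_eq_integral_abs_deriv_smul (f' := Real.exp) measurableSet_Ioi
    (fun x _ ↦ (Real.hasDerivAt_exp x).hasDerivWithinAt) Real.exp_injective.injOn]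
  refine setIntegral_congr_fun measurableSet_Ioi fun u _ ↦ ?_
  have he : ∀ z : ℂ, ((Real.exp u : ℝ) : ℂ) ^ z = Complex.exp (z * u) := by
    intro z
    rw [Complex.cpow_def_of_ne_zero (by exact_mod_cast (Real.exp_pos u).ne'), ← Complex.ofReal_log
      (Real.exp_pos u).le, Real.log_exp, mul_comm]
  simp only [he, abs_of_pos (Real.exp_pos u), pntF, Complex.real_smul]
  push_cast
  rw [mul_sub, sub_mul, mul_left_comm, one_mul, mul_assoc, ← Complex.exp_add, ← Complex.exp_add,
    ← Complex.exp_add]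
  ring_nf

open MeasureTheory Filter Topology

/-- Fejer kernel -/
noncomputable def pntK (l v : ℝ) : ℝ := ∫ y in (0:ℝ)..l, 2 * (1 - y / l) * Real.cos (y * v)

lemma pntK_eq {l v : ℝ} (hl : 0 < l) (hv : v ≠ 0) :
    pntK l v = 2 * (1 - Real.cos (l * v)) / (l * v ^ 2) := by
  unfold pntK
  rw [intervalIntegral.integral_eq_sub_of_hasDerivAt
    (f := fun y ↦ 2 * ((1 - y / l) * (Real.sin (y * v) / v) - Real.cos (y * v) / (l * v ^ 2)))]
  · simp
    field_simp
    ring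
  · intro y _
    have h1 : HasDerivAt (fun y ↦ y * v) v y := by simpa using (hasDerivAt_id y).mul_const v
    have h2 := (h1.sin).div_const v
    have h3 := (h1.cos).div_const (l * v ^ 2)
    have h4 : HasDerivAt (fun y ↦ 1 - y / l) (-(1 / l)) y := by
      simpa using ((hasDerivAt_id y).div_const l).const_sub 1
    convert! ((h4.mul h2).sub h3).const_mul 2 using 1
    field_simp
    ring
  · apply Continuous.intervalIntegrable
    fun_prop

lemma pntK_zero {l : ℝ} (hl : 0 < l) : pntK l 0 = l := by
  unfold pntK
  simp only [mul_zero, Real.cos_zero, mul_one]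
  rw [intervalIntegral.integral_eq_sub_of_hasDerivAt
    (f := fun y ↦ 2 * (y - y ^ 2 / (2 * l)))]
  · field_simp
    ring
  · intro y _
    have h := (((hasDerivAt_id y).sub (((hasDerivAt_id y).pow 2).div_const (2 * l)))).const_mul 2
    convert! h using 1
    simp
    field_simp
  · apply Continuous.intervalIntegrable
    fun_prop

lemma pntK_nonneg {l : ℝ} (hl : 0 < l) (v : ℝ) : 0 ≤ pntK l v := by
  rcases eq_or_ne v 0 with rfl | hv
  · rw [pntK_zero hl]; exact hl.le
  · rw [pntK_eq hl hv]
    have := Real.cos_le_one (l * v)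
    have : 0 < v ^ 2 := by positivity
    apply div_nonneg <;> nlinarith

lemma pntK_le {l v : ℝ} (hl : 0 < l) (hv : v ≠ 0) : pntK l v ≤ 4 / (l * v ^ 2) := by
  rw [pntK_eq hl hv]
  have : 0 < v ^ 2 := by positivity
  gcongr
  have := Real.neg_one_le_cos (l * v)
  linarith

lemma pntK_le_self {l v : ℝ} (hl : 0 < l) : pntK l v ≤ l := by
  rcases eq_or_ne v 0 with rfl | hv
  · rw [pntK_zero hl]
  · rw [pntK_eq hl hv, div_le_iff₀ (by positivity)]
    have := Real.one_sub_sq_div_two_le_cos (x := l * v)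
    nlinarith

lemma pntK_ge {l v : ℝ} (hl : 0 < l) (hv : |v| ≤ 1 / l) : l / 2 ≤ pntK l v := by
  rcases eq_or_ne v 0 with rfl | hv0
  · rw [pntK_zero hl]; linarith
  · rw [pntK_eq hl hv0, le_div_iff₀ (by positivity)]
    have h1 : |l * v| ≤ 1 := by
      rw [abs_mul, abs_of_pos hl]
      calc l * |v| ≤ l * (1 / l) := by gcongr
        _ = 1 := by field_simp
    have h2 := Real.cos_bound h1
    have h3 : |l * v| ^ 4 ≤ (l * v) ^ 2 := by
      rw [← sq_abs (l * v)]
      have := abs_nonneg (l * v)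
      nlinarith [pow_le_pow_of_le_one this h1 (show 2 ≤ 4 by norm_num)]
    have h4 := (abs_le.mp h2).2
    nlinarith

lemma pntK_cont (l : ℝ) : Continuous (pntK l) := by
  unfold pntK
  apply intervalIntegral.continuous_parametric_intervalIntegral_of_continuous'
  fun_prop

lemma pntK_bound {l : ℝ} (hl : 0 < l) (v : ℝ) : pntK l v ≤ (l + 4 / l) * (1 + v ^ 2)⁻¹ := by
  rw [← div_eq_mul_inv, le_div_iff₀ (by positivity)]
  rcases eq_or_ne v 0 with rfl | hv
  · rw [pntK_zero hl]
    have : 0 < 4 / l := by positivity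
    linarith
  · have h1 := pntK_le_self (v := v) hl
    have h2 := pntK_le hl hv
    rw [show 4 / (l * v ^ 2) = (4 / l) / v ^ 2 by field_simp, le_div_iff₀ (by positivity)] at h2
    linarith

lemma pntK_integrable {l : ℝ} (hl : 0 < l) : Integrable (pntK l) := by
  refine Integrable.mono' (integrable_inv_one_add_sq.const_mul (l + 4 / l))
    (pntK_cont l).aestronglyMeasurable (Eventually.of_forall fun v ↦ ?_)
  rw [Real.norm_of_nonneg (pntK_nonneg hl v)]
  exact pntK_bound hl v

/-- Tauberian step -/
lemma pnt_taub {f : ℝ → ℝ} {M : ℝ} (hM : 0 < M) (hf : Measurable f) (hb : ∀ u, |f u| ≤ M)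
    (hH : ∀ l : ℝ, 0 < l →
      Tendsto (fun u ↦ ∫ v in Set.Ioi (0:ℝ), f v * pntK l (v - u)) atTop (𝓝 0))
    {δ η : ℝ} (hδ : 0 < δ) (hη : 0 < η) :
    ∀ᶠ u in atTop, ¬ ∀ v, |v - u| ≤ η → δ ≤ f v := by
  set l : ℝ := max (1 / η) (16 * M / (δ * η)) with hl'
  have hl : 0 < l := lt_of_lt_of_le (by positivity) (le_max_left _ _)
  have hl1 : 1 / l ≤ η := by
    rw [div_le_iff₀ hl, ← div_le_iff₀' hη]; exact le_max_left _ _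
  have hl2 : 8 * M / (l * η) ≤ δ / 2 := by
    have : 16 * M / (δ * η) ≤ l := le_max_right _ _
    rw [div_le_iff₀ (by positivity)] at this ⊢
    linarith
  have h1 := hH l hl
  filter_upwards [h1.eventually (gt_mem_nhds (show (0:ℝ) < δ / 2 by positivity)),
    eventually_gt_atTop η] with u hu huη hcon
  have hint : IntegrableOn (fun v ↦ f v * pntK l (v - u)) (Set.Ioi 0) := by
    refine Integrable.integrableOn ?_
    refine Integrable.bdd_mul (c := M) ((pntK_integrable hl).comp_sub_right u)
      hf.aestronglyMeasurable (Eventually.of_forall hb)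
  -- lower bound function
  have hin : IntegrableOn (fun v ↦ f v * pntK l (v - u)) (Set.Icc (u - η) (u + η)) := by
    refine hint.mono_set fun x hx ↦ ?_
    have := hx.1
    simp only [Set.mem_Ioi]; linarith
  have hr : IntegrableOn (fun v ↦ f v * pntK l (v - u)) (Set.Ioi (u + η)) :=
    hint.mono_set (Set.Ioi_subset_Ioi (by linarith))
  have hle : IntegrableOn (fun v ↦ f v * pntK l (v - u)) (Set.Ioo 0 (u - η)) :=
    hint.mono_set Set.Ioo_subset_Ioi_self
  have hsplit : ∫ v in Set.Ioi (0:ℝ), f v * pntK l (v - u) =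
      (∫ v in Set.Ioo 0 (u - η), f v * pntK l (v - u)) +
      ((∫ v in Set.Icc (u - η) (u + η), f v * pntK l (v - u)) +
      ∫ v in Set.Ioi (u + η), f v * pntK l (v - u)) := by
    rw [← setIntegral_union _ measurableSet_Ioi hin hr,
      ← setIntegral_union _ (measurableSet_Icc.union measurableSet_Ioi) hle (hin.union hr)]
    · congr 2
      ext x
      simp only [Set.mem_Ioi, Set.mem_union, Set.mem_Ioo, Set.mem_Icc]
      constructor
      · intro hx
        by_cases h1 : x < u - η
        · exact Or.inl ⟨hx, h1⟩
        · by_cases h2 : x ≤ u + η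
          · exact Or.inr (Or.inl ⟨not_lt.mp h1, h2⟩)
          · exact Or.inr (Or.inr (not_le.mp h2))
      · rintro (h | h | h)
        · exact h.1
        · linarith [h.1]
        · linarith
    · rw [Set.disjoint_left]
      intro x hx hx'
      simp only [Set.mem_Ioi, Set.mem_union, Set.mem_Ioo, Set.mem_Icc] at hx hx'
      rcases hx' with h | h <;> linarith [h]
    · rw [Set.disjoint_left]
      intro x hx hx'
      simp only [Set.mem_Ioi, Set.mem_Icc] at hx hx'
      linarith
  have hmid : δ ≤ ∫ v in Set.Icc (u - η) (u + η), f v * pntK l (v - u) := by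
    have e : ∫ v in Set.Icc (u - 1 / l) (u + 1 / l), δ * (l / 2) = δ := by
      rw [setIntegral_const, measureReal_def, Real.volume_Icc, ENNReal.toReal_ofReal]
      · simp only [smul_eq_mul]; field_simp; ring
      · have : 0 < 1 / l := by positivity
        linarith
    rw [← e]
    have hsub : Set.Icc (u - 1 / l) (u + 1 / l) ⊆ Set.Icc (u - η) (u + η) :=
      Set.Icc_subset_Icc (by linarith) (by linarith)
    refine le_trans ?_ (setIntegral_mono_set hin ?_ (Eventually.of_forall hsub))
    · refine setIntegral_mono_on ?_ (hin.mono_set hsub) measurableSet_Icc ?_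
      · exact continuous_const.integrableOn_Icc
      · intro v hv
        have hv1 : |v - u| ≤ 1 / l := by rw [abs_le]; constructor <;> linarith [hv.1, hv.2]
        have := pntK_ge hl hv1
        have h6 := hcon v (hv1.trans hl1)
        exact mul_le_mul h6 this (by positivity) (hδ.le.trans h6)
    · refine (ae_restrict_iff' measurableSet_Icc).mpr (Eventually.of_forall fun v hv ↦ ?_)
      have hv1 : |v - u| ≤ η := by rw [abs_le]; constructor <;> linarith [hv.1, hv.2]
      exact mul_nonneg (hδ.le.trans (hcon v hv1)) (pntK_nonneg hl _)
  have hpt : ∀ v, v ≠ u → -(4 * M / l) * (1 / (v - u) ^ 2) ≤ f v * pntK l (v - u) := by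
    intro v hv
    have h1 := pntK_le hl (sub_ne_zero.mpr hv)
    have h2 := pntK_nonneg hl (v - u)
    have h3 := (abs_le.mp (hb v)).1
    have h4 : -(4 * M / l) * (1 / (v - u) ^ 2) = - M * (4 / (l * (v - u) ^ 2)) := by
      have := sub_ne_zero.mpr hv
      field_simp
    rw [h4]
    nlinarith
  have hrt : -(4 * M / (l * η)) ≤ ∫ v in Set.Ioi (u + η), f v * pntK l (v - u) := by
    have hd : ∀ x ∈ Set.Ici (u + η), HasDerivAt (fun v ↦ (4 * M / l) * (v - u)⁻¹)
        (-(4 * M / l) * (1 / (x - u) ^ 2)) x := by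
      intro x hx
      have hx' : x - u ≠ 0 := by have : u + η ≤ x := hx; linarith
      convert! (((hasDerivAt_id x).sub_const u).inv hx').const_mul (4 * M / l) using 1
      simp; ring
    have ht : Tendsto (fun v ↦ (4 * M / l) * (v - u)⁻¹) atTop (𝓝 0) := by
      rw [show (0:ℝ) = 4 * M / l * 0 by simp]
      exact (tendsto_inv_atTop_zero.comp (tendsto_atTop_add_const_right _ (-u) tendsto_id)).const_mul _
    have hneg : ∀ x ∈ Set.Ioi (u + η), -(4 * M / l) * (1 / (x - u) ^ 2) ≤ 0 := by
      intro x _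
      have : 0 ≤ (4 * M / l) * (1 / (x - u) ^ 2) := by positivity
      linarith
    have hi := integrableOn_Ioi_deriv_of_nonpos' hd hneg ht
    have he := integral_Ioi_of_hasDerivAt_of_nonpos' hd hneg ht
    have : -(4 * M / (l * η)) = ∫ x in Set.Ioi (u + η), -(4 * M / l) * (1 / (x - u) ^ 2) := by
      rw [he]; simp; field_simp
    rw [this]
    refine setIntegral_mono_on hi hr measurableSet_Ioi fun v hv ↦ hpt v ?_
    have : u + η < v := hv
    intro h; linarith
  have hlt : -(4 * M / (l * η)) ≤ ∫ v in Set.Ioo 0 (u - η), f v * pntK l (v - u) := by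
    have hd : ∀ x ∈ Set.uIcc 0 (u - η), HasDerivAt (fun v ↦ (4 * M / l) * (v - u)⁻¹)
        (-(4 * M / l) * (1 / (x - u) ^ 2)) x := by
      intro x hx
      rw [Set.uIcc_of_le (by linarith)] at hx
      have hx' : x - u ≠ 0 := by have := hx.2; linarith
      convert! (((hasDerivAt_id x).sub_const u).inv hx').const_mul (4 * M / l) using 1
      simp; ring
    have hc : ContinuousOn (fun x ↦ -(4 * M / l) * (1 / (x - u) ^ 2)) (Set.uIcc 0 (u - η)) := by
      intro x hx
      rw [Set.uIcc_of_le (by linarith)] at hx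
      have hx' : (x - u) ^ 2 ≠ 0 := by
        have := hx.2
        have : x - u ≠ 0 := by linarith
        positivity
      refine ContinuousAt.continuousWithinAt ?_
      fun_prop (disch := exact hx')
    have he := intervalIntegral.integral_eq_sub_of_hasDerivAt hd hc.intervalIntegrable
    rw [intervalIntegral.integral_of_le (by linarith), integral_Ioc_eq_integral_Ioo] at he
    have hi : IntegrableOn (fun x ↦ -(4 * M / l) * (1 / (x - u) ^ 2)) (Set.Ioo 0 (u - η)) := by
      have := hc.integrableOn_uIcc (μ := volume)
      rw [Set.uIcc_of_le (by linarith)] at this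
      exact this.mono_set Set.Ioo_subset_Icc_self
    have : -(4 * M / (l * η)) ≤ ∫ x in Set.Ioo 0 (u - η), -(4 * M / l) * (1 / (x - u) ^ 2) := by
      rw [he]
      have h1 : 4 * M / l * (u - η - u)⁻¹ = -(4 * M / (l * η)) := by
        rw [show u - η - u = -η by ring]; field_simp
      have h2 : 4 * M / l * (0 - u)⁻¹ ≤ 0 := by
        have : (0 - u)⁻¹ ≤ 0 := by rw [zero_sub, inv_neg]; simp; linarith
        exact mul_nonpos_of_nonneg_of_nonpos (by positivity) this
      rw [h1]; linarith
    refine this.trans ?_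
    refine setIntegral_mono_on hi hle measurableSet_Ioo fun v hv ↦ hpt v ?_
    have : v < u - η := hv.2
    intro h; linarith
  have : 4 * M / (l * η) + 4 * M / (l * η) = 8 * M / (l * η) := by ring
  linarith

open MeasureTheory Filter Topology

/-- real part of a complex exponential integral -/
lemma pntK_re (l w : ℝ) : pntK l w =
    (∫ y in (0:ℝ)..l, ((2 * (1 - y / l) : ℝ) : ℂ) * Complex.exp (-(y * w * Complex.I))).re := by
  have h : IntervalIntegrable (fun y : ℝ ↦ ((2 * (1 - y / l) : ℝ) : ℂ) *
      Complex.exp (-(y * w * Complex.I))) volume 0 l := by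
    apply Continuous.intervalIntegrable
    fun_prop
  have := Complex.reCLM.intervalIntegral_comp_comm h
  rw [← Complex.reCLM_apply, ← this, pntK]
  congr 1
  ext y
  rw [Complex.reCLM_apply, Complex.re_ofReal_mul, Complex.exp_re]
  simp

lemma pnt_smooth_sigma {g : ℂ → ℂ}
    (hg : ∀ s : ℂ, 1 < s.re → ∫ u in Set.Ioi (0:ℝ), (pntF u : ℂ) * Complex.exp (-(s-1)*u) = g s)
    {l : ℝ} (hl : 0 < l) (u : ℝ) {σ : ℝ} (hσ : 0 < σ) :
    ∫ v in Set.Ioi (0:ℝ), Real.exp (-σ * v) * (pntF v * pntK l (v - u)) =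
    (∫ y in (0:ℝ)..l, Complex.exp (y * u * Complex.I) *
      (((2 * (1 - y / l) : ℝ) : ℂ) * g (1 + σ + y * Complex.I))).re := by
  have hm := pntF_meas
  set f : ℝ → ℝ → ℂ := fun y v ↦ ((2 * (1 - y / l) : ℝ) : ℂ) *
    Complex.exp (-(y * (v - u : ℝ) * Complex.I)) * ((Real.exp (-σ * v) * pntF v : ℝ) : ℂ) with hf
  have hexp : IntegrableOn (fun v : ℝ ↦ Real.exp (-σ * v)) (Set.Ioi 0) :=
    integrableOn_exp_mul_Ioi (by linarith) 0
  have hfi : Integrable (Function.uncurry f)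
      ((volume.restrict (Set.uIoc 0 l)).prod (volume.restrict (Set.Ioi 0))) := by
    have hb : Integrable (fun z : ℝ × ℝ ↦ (12:ℝ) * Real.exp (-σ * z.2))
        ((volume.restrict (Set.uIoc 0 l)).prod (volume.restrict (Set.Ioi 0))) := by
      refine Integrable.mul_prod (f := fun _ ↦ (12:ℝ)) (g := fun v ↦ Real.exp (-σ * v)) ?_ hexp
      rw [Set.uIoc_of_le hl.le]
      exact continuous_const.integrableOn_Ioc
    refine hb.mono' ?_ ?_
    · apply Measurable.aestronglyMeasurable
      simp only [hf, Function.uncurry_def]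
      fun_prop
    · rw [Measure.prod_restrict]
      refine (ae_restrict_iff' (measurableSet_uIoc.prod measurableSet_Ioi)).mpr
        (Eventually.of_forall fun z hz ↦ ?_)
      have hz1 := hz.1
      rw [Set.uIoc_of_le hl.le] at hz1
      simp only [hf, Function.uncurry_def]
      rw [norm_mul, norm_mul, Complex.norm_real, Complex.norm_real, norm_mul (Real.exp _)]
      have e1 : ‖Complex.exp (-(z.1 * (z.2 - u : ℝ) * Complex.I))‖ = 1 := by
        rw [Complex.norm_exp]; simp
      rw [e1, mul_one]
      have h1 : ‖2 * (1 - z.1 / l)‖ ≤ 2 := by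
        have a1 : z.1 / l ≤ 1 := by rw [div_le_one hl]; exact hz1.2
        have a2 : 0 ≤ z.1 / l := div_nonneg hz1.1.le hl.le
        rw [Real.norm_eq_abs, abs_le]; constructor <;> linarith
      have h2 : ‖pntF z.2‖ ≤ 6 := pntF_abs _
      have h3 : ‖Real.exp (-σ * z.2)‖ = Real.exp (-σ * z.2) := by
        rw [Real.norm_eq_abs, abs_of_pos (Real.exp_pos _)]
      rw [h3]
      have := Real.exp_pos (-σ * z.2)
      calc ‖2 * (1 - z.1 / l)‖ * (Real.exp (-σ * z.2) * ‖pntF z.2‖)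
          ≤ 2 * (Real.exp (-σ * z.2) * 6) := by gcongr
        _ = _ := by ring
  have hsw := intervalIntegral_integral_swap hfi
  have hL : ∀ y : ℝ, ∫ v in Set.Ioi (0:ℝ), f y v = Complex.exp (y * u * Complex.I) *
      (((2 * (1 - y / l) : ℝ) : ℂ) * g (1 + σ + y * Complex.I)) := by
    intro y
    rw [← hg _ (by simp [hσ]), ← integral_const_mul, ← integral_const_mul]
    congr 1
    ext v
    simp only [hf]
    have : Complex.exp (-(y * (v - u : ℝ) * Complex.I)) * ((Real.exp (-σ * v)) : ℂ) =
      Complex.exp (y * u * Complex.I) * Complex.exp (-(1 + σ + y * Complex.I - 1) * v) := by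
      rw [Complex.ofReal_exp, ← Complex.exp_add, ← Complex.exp_add]
      congr 1
      push_cast; ring
    rw [Complex.ofReal_mul (Real.exp _)]
    linear_combination (((2 * (1 - y / l) : ℝ) : ℂ) * pntF v) * this
  simp_rw [hL] at hsw
  rw [hsw]
  have hint2 := hfi.integral_prod_right
  have hfi3 : Integrable (fun v ↦ ∫ y in (0:ℝ)..l, f y v) (volume.restrict (Set.Ioi 0)) := by
    have h := hint2
    simp only [Function.uncurry_def] at h
    simpa only [intervalIntegral.integral_of_le hl.le, Set.uIoc_of_le hl.le] using h
  have := Complex.reCLM.integral_comp_comm hfi3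
  rw [← Complex.reCLM_apply, ← this]
  congr 1
  ext v
  simp only [hf]
  rw [intervalIntegral.integral_mul_const, Complex.reCLM_apply, Complex.re_mul_ofReal, pntK_re]
  ring

lemma pnt_smooth {l : ℝ} (hl : 0 < l) :
    Tendsto (fun u ↦ ∫ v in Set.Ioi (0:ℝ), pntF v * pntK l (v - u)) atTop (𝓝 0) := by
  obtain ⟨g, hgc, hg⟩ := pnt_laplace
  have hm := pntF_meas
  set G : ℝ → ℂ := fun y ↦ ((2 * (1 - y / l) : ℝ) : ℂ) * g (1 + y * Complex.I) with hG
  have key : ∀ u, ∫ v in Set.Ioi (0:ℝ), pntF v * pntK l (v - u) =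
      (∫ y in (0:ℝ)..l, Complex.exp (y * u * Complex.I) * G y).re := by
    intro u
    have t1 : Tendsto (fun σ : ℝ ↦ ∫ v in Set.Ioi (0:ℝ), Real.exp (-σ * v) *
        (pntF v * pntK l (v - u))) (𝓝[>] 0)
        (𝓝 (∫ v in Set.Ioi (0:ℝ), pntF v * pntK l (v - u))) := by
      have hint : IntegrableOn (fun v ↦ pntF v * pntK l (v - u)) (Set.Ioi 0) := by
        refine Integrable.integrableOn ?_
        exact Integrable.bdd_mul (c := 6) ((pntK_integrable hl).comp_sub_right u)
          hm.aestronglyMeasurable (Eventually.of_forall pntF_abs)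
      refine tendsto_integral_filter_of_dominated_convergence _ ?_ ?_ hint.norm ?_
      · refine Eventually.of_forall fun σ ↦ ?_
        exact (Measurable.aestronglyMeasurable (by fun_prop)).mul hint.aestronglyMeasurable
      · filter_upwards [self_mem_nhdsWithin] with σ hσ
        refine (ae_restrict_iff' measurableSet_Ioi).mpr (Eventually.of_forall fun v hv ↦ ?_)
        rw [norm_mul]
        have : ‖Real.exp (-σ * v)‖ ≤ 1 := by
          rw [Real.norm_eq_abs, abs_of_pos (Real.exp_pos _), Real.exp_le_one_iff]
          have h1 : 0 < σ := hσ
          have h2 : 0 < v := hv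
          nlinarith
        exact mul_le_of_le_one_left (norm_nonneg _) this
      · refine Eventually.of_forall fun v ↦ ?_
        have : Tendsto (fun σ : ℝ ↦ Real.exp (-σ * v) * (pntF v * pntK l (v - u))) (𝓝 0)
            (𝓝 (Real.exp (-0 * v) * (pntF v * pntK l (v - u)))) := by
          apply Continuous.tendsto
          fun_prop
        simp only [neg_zero, zero_mul, Real.exp_zero, one_mul] at this
        exact this.mono_left nhdsWithin_le_nhds
    have t2 : Tendsto (fun σ : ℝ ↦ ∫ y in (0:ℝ)..l, Complex.exp (y * u * Complex.I) *
      (((2 * (1 - y / l) : ℝ) : ℂ) * g (1 + σ + y * Complex.I))) (𝓝[>] 0)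
        (𝓝 (∫ y in (0:ℝ)..l, Complex.exp (y * u * Complex.I) * G y)) := by
      have hcomp : IsCompact (Set.Icc (0:ℝ) 1 ×ˢ Set.Icc (0:ℝ) l) := isCompact_Icc.prod isCompact_Icc
      have hgc2 : ContinuousOn (fun z : ℝ × ℝ ↦ g (1 + z.1 + z.2 * Complex.I))
          (Set.Icc (0:ℝ) 1 ×ˢ Set.Icc (0:ℝ) l) := by
        refine hgc.comp (Continuous.continuousOn (by fun_prop)) fun z hz ↦ ?_
        have := hz.1.1
        simp [this]
      obtain ⟨C, hC⟩ := hcomp.exists_bound_of_continuousOn hgc2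
      refine intervalIntegral.tendsto_integral_filter_of_dominated_convergence
        (fun _ ↦ 2 * C) ?_ ?_ (by simp) ?_
      · filter_upwards [Ioc_mem_nhdsGT (zero_lt_one' ℝ)] with σ hσ
        refine ContinuousOn.aestronglyMeasurable ?_ measurableSet_uIoc
        rw [Set.uIoc_of_le hl.le]
        have : ContinuousOn (fun y : ℝ ↦ g (1 + σ + y * Complex.I)) (Set.Ioc 0 l) := by
          refine hgc.comp (Continuous.continuousOn (by fun_prop)) fun z hz ↦ ?_
          simp [hσ.1.le]
        refine ContinuousOn.mul (Continuous.continuousOn (by fun_prop))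
          (ContinuousOn.mul (Continuous.continuousOn (by fun_prop)) this)
      · filter_upwards [Ioc_mem_nhdsGT (zero_lt_one' ℝ)] with σ hσ
        refine Eventually.of_forall fun y hy ↦ ?_
        rw [Set.uIoc_of_le hl.le] at hy
        have h1 := hC (σ, y) ⟨⟨hσ.1.le, hσ.2⟩, ⟨hy.1.le, hy.2⟩⟩
        have e1 : ‖Complex.exp (y * u * Complex.I)‖ = 1 := by
          rw [Complex.norm_exp]; simp
        have h2 : ‖2 * (1 - y / l)‖ ≤ 2 := by
          have a1 : y / l ≤ 1 := by rw [div_le_one hl]; exact hy.2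
          have a2 : 0 ≤ y / l := div_nonneg hy.1.le hl.le
          rw [Real.norm_eq_abs, abs_le]; constructor <;> linarith
        rw [norm_mul, norm_mul, e1, one_mul, Complex.norm_real]
        gcongr
      · refine Eventually.of_forall fun y hy ↦ ?_
        refine Tendsto.const_mul _ (Tendsto.const_mul _ ?_)
        have h1 : ContinuousWithinAt g {s | 1 ≤ s.re} (1 + y * Complex.I) := hgc _ (by simp)
        refine h1.tendsto.comp ?_
        refine tendsto_nhdsWithin_iff.mpr ⟨?_, ?_⟩
        · have : Tendsto (fun σ : ℝ ↦ (1 + σ + y * Complex.I : ℂ)) (𝓝 0)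
            (𝓝 (1 + (0:ℝ) + y * Complex.I)) := by
            apply Continuous.tendsto
            fun_prop
          simp only [Complex.ofReal_zero, add_zero] at this
          exact this.mono_left nhdsWithin_le_nhds
        · filter_upwards [self_mem_nhdsWithin] with σ hσ
          have : 0 < σ := hσ
          simp [this.le]
    have t3 := (Complex.continuous_re.tendsto _).comp t2
    refine tendsto_nhds_unique t1 (t3.congr' ?_)
    filter_upwards [self_mem_nhdsWithin] with σ hσ
    exact (pnt_smooth_sigma hg hl u hσ).symm
  simp_rw [key]
  have hRL := Real.tendsto_integral_exp_smul_cocompact (Set.indicator (Set.Ioc 0 l) G)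
  have ht : Tendsto (fun u : ℝ ↦ -u / (2 * Real.pi)) atTop (cocompact ℝ) := by
    rw [cocompact_eq_atBot_atTop]
    refine Tendsto.mono_right ?_ le_sup_left
    exact (tendsto_neg_atTop_atBot).atBot_div_const (by positivity)
  have h2 := (Complex.continuous_re.tendsto _).comp (hRL.comp ht)
  rw [Complex.zero_re] at h2
  refine h2.congr fun u ↦ ?_
  simp only [Function.comp]
  congr 1
  rw [intervalIntegral.integral_of_le hl.le, ← integral_indicator measurableSet_Ioc]
  congr 1
  ext y
  by_cases hy : y ∈ Set.Ioc 0 l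
  · rw [Set.indicator_of_mem hy, Set.indicator_of_mem hy, Circle.smul_def, Real.fourierChar_apply,
      smul_eq_mul]
    congr 2
    push_cast
    field_simp
  · rw [Set.indicator_of_notMem hy, Set.indicator_of_notMem hy, smul_zero]

lemma pntF_tendsto : Tendsto pntF atTop (𝓝 0) := by
  rw [Metric.tendsto_nhds]
  intro ε' hε'
  obtain ⟨ε, hε, hε1, hεε⟩ : ∃ ε : ℝ, 0 < ε ∧ ε < 1 ∧ ε ≤ ε' :=
    ⟨min ε' (1/2), by positivity, lt_of_le_of_lt (min_le_right _ _) (by norm_num), min_le_left _ _⟩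
  have hup : ∀ᶠ u in atTop, pntF u < ε := by
    have hη : 0 < Real.log ((1 + ε) / (1 + ε / 2)) / 2 := by
      have : 0 < Real.log ((1 + ε) / (1 + ε / 2)) := by
        apply Real.log_pos
        rw [one_lt_div (by linarith)]; linarith
      linarith
    set η := Real.log ((1 + ε) / (1 + ε / 2)) / 2 with hηd
    have h := pnt_taub (M := 6) (by norm_num) pntF_meas pntF_abs (fun l hl ↦ pnt_smooth hl)
      (half_pos hε) hη
    have h2 := (tendsto_atTop_add_const_right _ η tendsto_id).eventually h
    filter_upwards [h2] with u hu
    by_contra! hc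
    apply hu
    intro v hv
    simp only [id] at hv
    rw [abs_le] at hv
    have e2 : Real.exp (2 * η) = (1 + ε) / (1 + ε / 2) := by
      rw [hηd, mul_div_cancel₀ _ (by norm_num), Real.exp_log (by positivity)]
    have m := Chebyshev.psi_mono (Real.exp_le_exp.mpr (show u ≤ v by linarith))
    unfold pntF at hc ⊢
    have a1 : (1 + ε) * Real.exp u ≤ Chebyshev.psi (Real.exp u) := by
      have := mul_le_mul_of_nonneg_right hc (Real.exp_pos u).le
      rw [sub_mul, mul_assoc, ← Real.exp_add] at this
      simp at this; linarith
    have a2 : (1 + ε / 2) * Real.exp v ≤ (1 + ε) * Real.exp u := by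
      have : Real.exp v ≤ Real.exp (2 * η) * Real.exp u := by
        rw [← Real.exp_add]; apply Real.exp_le_exp.mpr; linarith
      calc (1 + ε / 2) * Real.exp v ≤ (1 + ε / 2) * (Real.exp (2 * η) * Real.exp u) := by gcongr
        _ = _ := by rw [e2]; field_simp
    have a3 : (1 + ε / 2) * Real.exp v * Real.exp (-v) ≤
        Chebyshev.psi (Real.exp v) * Real.exp (-v) := by
      gcongr; linarith
    rw [mul_assoc, ← Real.exp_add] at a3
    simp at a3; linarith
  have hlo : ∀ᶠ u in atTop, -ε < pntF u := by
    have hη : 0 < Real.log ((1 - ε / 2) / (1 - ε)) / 2 := by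
      have : 0 < Real.log ((1 - ε / 2) / (1 - ε)) := by
        apply Real.log_pos
        rw [one_lt_div (by linarith)]; linarith
      linarith
    set η := Real.log ((1 - ε / 2) / (1 - ε)) / 2 with hηd
    have h := pnt_taub (f := fun u ↦ -pntF u) (M := 6) (by norm_num) pntF_meas.neg
      (fun u ↦ by rw [abs_neg]; exact pntF_abs u)
      (fun l hl ↦ by
        have := (pnt_smooth hl).neg
        rw [neg_zero] at this
        refine this.congr fun u ↦ ?_
        rw [← integral_neg]
        simp only [neg_mul])
      (half_pos hε) hη
    have h2 := (tendsto_atTop_add_const_right _ (-η) tendsto_id).eventually h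
    filter_upwards [h2] with u hu
    by_contra! hc
    apply hu
    intro v hv
    simp only [id] at hv
    rw [abs_le] at hv
    have e2 : Real.exp (2 * η) = (1 - ε / 2) / (1 - ε) := by
      rw [hηd, mul_div_cancel₀ _ (by norm_num), Real.exp_log]
      apply div_pos <;> linarith
    have m := Chebyshev.psi_mono (Real.exp_le_exp.mpr (show v ≤ u by linarith))
    unfold pntF at hc ⊢
    have a1 : Chebyshev.psi (Real.exp u) ≤ (1 - ε) * Real.exp u := by
      have := mul_le_mul_of_nonneg_right hc (Real.exp_pos u).le
      rw [sub_mul, mul_assoc, ← Real.exp_add] at this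
      simp at this; linarith
    have a2 : (1 - ε) * Real.exp u ≤ (1 - ε / 2) * Real.exp v := by
      have h1 : Real.exp u ≤ Real.exp (2 * η) * Real.exp v := by
        rw [← Real.exp_add]; apply Real.exp_le_exp.mpr; linarith
      have h3 : 0 < 1 - ε := by linarith
      calc (1 - ε) * Real.exp u ≤ (1 - ε) * (Real.exp (2 * η) * Real.exp v) := by gcongr
        _ = _ := by rw [e2]; field_simp
    have a3 : Chebyshev.psi (Real.exp v) * Real.exp (-v) ≤
        (1 - ε / 2) * Real.exp v * Real.exp (-v) := by
      gcongr; linarith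
    rw [mul_assoc (1 - ε / 2), ← Real.exp_add] at a3
    simp at a3; linarith
  filter_upwards [hup, hlo] with u h1 h2
  rw [Real.dist_eq, sub_zero, abs_lt]
  constructor <;> linarith

lemma pnt_psi : Tendsto (fun x : ℝ ↦ Chebyshev.psi x / x) atTop (𝓝 1) := by
  have h := (pntF_tendsto.comp Real.tendsto_log_atTop).add_const 1
  rw [zero_add] at h
  refine h.congr' ?_
  filter_upwards [eventually_gt_atTop 0] with x hx
  simp only [Function.comp, pntF]
  rw [Real.exp_neg, Real.exp_log hx]
  ring

lemma pnt_theta : Tendsto (fun x : ℝ ↦ Chebyshev.theta x / x) atTop (𝓝 1) := by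
  have h1 : Tendsto (fun x : ℝ ↦ (Chebyshev.psi x - Chebyshev.theta x) / x) atTop (𝓝 0) := by
    have h2 : Tendsto (fun x : ℝ ↦ 2 * (Real.log x / x ^ (1/2 : ℝ))) atTop (𝓝 0) := by
      have := (isLittleO_log_rpow_atTop (show (0:ℝ) < 1/2 by norm_num)).tendsto_div_nhds_zero
      simpa using this.const_mul 2
    refine squeeze_zero' ?_ ?_ h2
    · filter_upwards [eventually_gt_atTop 0] with x hx
      have := Chebyshev.theta_le_psi x
      exact div_nonneg (by linarith) hx.le
    · filter_upwards [eventually_ge_atTop 1] with x hx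
      have := Chebyshev.psi_sub_theta_le hx
      rw [← Real.sqrt_eq_rpow, div_le_iff₀ (by linarith)]
      refine this.trans (le_of_eq ?_)
      have h3 : Real.sqrt x * Real.sqrt x = x := Real.mul_self_sqrt (by linarith)
      have h4 : Real.sqrt x ≠ 0 := (Real.sqrt_pos.mpr (by linarith)).ne'
      field_simp
      linear_combination Real.log x * h3
  have := pnt_psi.sub h1
  rw [sub_zero] at this
  refine this.congr fun x ↦ ?_
  ring

open MeasureTheory Filter Topology

/-- `irH m i = 4 ^ i * binom (m - 1/2) i` -/
def irH : ℕ → ℕ → ℤ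
  | 0, i => (-1) ^ i * (Nat.centralBinom i : ℤ)
  | _ + 1, 0 => 1
  | m + 1, i + 1 => irH m (i + 1) + 4 * irH m i

lemma irH_zero (m : ℕ) : irH m 0 = 1 := by
  cases m <;> simp [irH]

lemma irH_rec (m : ℕ) : ∀ i : ℕ, ((i : ℤ) + 1) * irH m (i + 1) =
    2 * (2 * (m : ℤ) - 1 - 2 * i) * irH m i := by
  induction m with
  | zero =>
    intro i
    have := Nat.succ_mul_centralBinom_succ i
    have h : ((i : ℤ) + 1) * (Nat.centralBinom (i + 1) : ℤ) =
      2 * (2 * i + 1) * (Nat.centralBinom i : ℤ) := by exact_mod_cast this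
    simp only [irH]
    push_cast
    rw [pow_succ]
    linear_combination (-1) * (-1) ^ i * h
  | succ m ih =>
    intro i
    cases i with
    | zero =>
      have := ih 0
      simp only [irH, irH_zero] at *
      push_cast at *
      linarith
    | succ i =>
      have h1 := ih i
      have h2 := ih (i + 1)
      simp only [irH]
      push_cast at *
      linear_combination h2 + 4 * h1

lemma irH_vand (B : ℕ) (k : ℕ) : ∀ C : ℕ, irH (B + k) C =
    ∑ j ∈ Finset.range (C + 1), (k.choose j : ℤ) * (4 ^ j * irH B (C - j)) := by
  induction k with
  | zero =>
    intro C
    rw [Finset.sum_range_succ']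
    simp
  | succ k ih =>
    intro C
    cases C with
    | zero => simp [irH_zero]
    | succ C =>
      rw [← add_assoc, irH, ih, ih, Finset.sum_range_succ' _ (C + 1),
        Finset.sum_range_succ' _ (C + 1), Finset.mul_sum]
      simp only [Nat.choose_zero_right]
      rw [add_right_comm, ← Finset.sum_add_distrib]
      congr 1
      apply Finset.sum_congr rfl
      intro j _
      rw [Nat.choose_succ_succ, Nat.add_sub_add_right]
      push_cast
      ring

lemma irH_nonneg (m : ℕ) : ∀ i ≤ m, 0 ≤ irH m i ∧ irH m i ≤ 4 ^ i * (m.choose i : ℤ) := by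
  intro i
  induction i with
  | zero => intro _; simp [irH_zero]
  | succ i ih =>
    intro hi
    obtain ⟨h1, h2⟩ := ih (by omega)
    have hr := irH_rec m i
    have hc : ((i : ℤ) + 1) * (m.choose (i + 1) : ℤ) = ((m : ℤ) - i) * (m.choose i : ℤ) := by
      have := Nat.choose_succ_right_eq m i
      have h3 : ((m - i : ℕ) : ℤ) = (m : ℤ) - i := by push_cast [show i ≤ m by omega]; ring
      rw [← h3]
      have : (m.choose (i + 1) : ℤ) * (i + 1) = (m.choose i : ℤ) * (m - i : ℕ) := by
        exact_mod_cast this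
      linarith
    have hmi : (0:ℤ) ≤ 2 * (2 * (m : ℤ) - 1 - 2 * i) := by
      have : (i : ℤ) + 1 ≤ m := by exact_mod_cast hi
      linarith
    have hi0 : (0:ℤ) < (i : ℤ) + 1 := by positivity
    constructor
    · have : 0 ≤ ((i : ℤ) + 1) * irH m (i + 1) := by rw [hr]; positivity
      exact nonneg_of_mul_nonneg_right this hi0
    · refine le_of_mul_le_mul_left ?_ hi0
      rw [hr]
      calc 2 * (2 * (m : ℤ) - 1 - 2 * i) * irH m i
          ≤ 2 * (2 * (m : ℤ) - 1 - 2 * i) * (4 ^ i * (m.choose i : ℤ)) := by gcongr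
        _ ≤ 4 * ((m : ℤ) - i) * (4 ^ i * (m.choose i : ℤ)) := by
            exact mul_le_mul_of_nonneg_right (by linarith) (by positivity)
        _ = _ := by
            rw [pow_succ]
            linear_combination (-4 * 4 ^ i) * hc

lemma irH_fact (m : ℕ) : ∀ i ≤ m, irH m i * ((m.factorial * (2 * (m - i)).factorial * i.factorial : ℕ) : ℤ) =
    (((2 * m).factorial * (m - i).factorial : ℕ) : ℤ) := by
  intro i
  induction i with
  | zero => intro _; simp [irH_zero]; ring
  | succ i ih =>
    intro hi
    have h1 := ih (by omega)
    have hr := irH_rec m i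
    obtain ⟨d, rfl⟩ : ∃ d, m = i + 1 + d := ⟨m - (i + 1), by omega⟩
    rw [show i + 1 + d - i = d + 1 by omega] at h1
    rw [show i + 1 + d - (i + 1) = d by omega]
    rw [show 2 * (d + 1) = 2 * d + 1 + 1 by ring, Nat.factorial_succ (2 * d + 1),
      Nat.factorial_succ (2 * d), Nat.factorial_succ d] at h1
    rw [Nat.factorial_succ i]
    push_cast at *
    have hd : (0:ℤ) < (d : ℤ) + 1 := by positivity
    apply mul_left_cancel₀ hd.ne'
    rw [← mul_assoc, ← mul_assoc] at *
    linear_combination h1 + ((d:ℤ)+1) * ((i + 1 + d).factorial * (2 * d).factorial * i.factorial : ℤ) * hr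

/-- iterated backward difference -/
def irD (e : ℕ → ℝ) : ℕ → ℕ → ℝ
  | 0, b => e b
  | a + 1, b => irD e a b - irD e a (b + 1)

lemma irD_eq (e : ℕ → ℝ) (a : ℕ) : ∀ b, irD e a b =
    ∑ l ∈ Finset.range (a + 1), (a.choose l : ℝ) * ((-1) ^ l * e (b + l)) := by
  induction a with
  | zero => intro b; simp [irD]
  | succ a ih =>
    intro b
    rw [irD, ih, ih]
    have := Finset.sum_choose_succ_mul (fun l _ ↦ (-1 : ℝ) ^ l * e (b + l)) a
    rw [this, sub_eq_add_neg, ← Finset.sum_neg_distrib]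
    congr 1
    apply Finset.sum_congr rfl
    intro l _
    rw [pow_succ, show b + 1 + l = b + (l + 1) by ring]
    ring

lemma irV_aux (e : ℕ → ℝ) (A j : ℕ) :
    ∑ k ∈ Finset.range (A + 1), (-1 : ℝ) ^ k * A.choose k * k.choose j * e k =
    A.choose j * (-1) ^ j * irD e (A - j) j := by
  by_cases hj : j ≤ A
  · obtain ⟨d, rfl⟩ := Nat.exists_eq_add_of_le hj
    rw [show j + d + 1 = j + (d + 1) by ring, Finset.sum_range_add, Finset.sum_eq_zero, zero_add,
      Nat.add_sub_cancel_left, irD_eq, Finset.mul_sum]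
    · apply Finset.sum_congr rfl
      intro l hl
      have h := Nat.choose_mul (n := j + d) (k := j + l) (s := j)
        (by omega)
      rw [Nat.add_sub_cancel_left, Nat.add_sub_cancel_left] at h
      have h' : ((j + d).choose (j + l) : ℝ) * ((j + l).choose j : ℝ) =
        ((j + d).choose j : ℝ) * (d.choose l : ℝ) := by exact_mod_cast h
      rw [pow_add]
      linear_combination (-1) ^ j * (-1) ^ l * e (j + l) * h'
    · intro k hk
      rw [Nat.choose_eq_zero_of_lt (Finset.mem_range.mp hk)]
      simp
  · rw [Nat.choose_eq_zero_of_lt (not_le.mp hj)]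
    simp only [Nat.cast_zero, zero_mul]
    apply Finset.sum_eq_zero
    intro k hk
    rw [Nat.choose_eq_zero_of_lt (show k < j by have := Finset.mem_range.mp hk; omega)]
    simp

/-- the basic functional sum -/
noncomputable def irS (A B C : ℕ) (e : ℕ → ℝ) : ℝ :=
  ∑ k ∈ Finset.range (A + 1), (-1 : ℝ) ^ k * A.choose k * irH (B + k) C * e k

lemma irV (A B C : ℕ) (e : ℕ → ℝ) : irS A B C e =
    ∑ j ∈ Finset.range (C + 1), (4:ℝ) ^ j * irH B (C - j) * (A.choose j * (-1) ^ j * irD e (A - j) j) := by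
  unfold irS
  simp_rw [← irV_aux, Finset.mul_sum]
  rw [Finset.sum_comm]
  apply Finset.sum_congr rfl
  intro k _
  rw [irH_vand]
  push_cast
  rw [Finset.mul_sum, Finset.sum_mul]
  apply Finset.sum_congr rfl
  intro j _
  ring

open MeasureTheory Filter Topology

/-- two-adic divisibility of a real number -/
def irVal (m : ℕ) (x : ℝ) : Prop := ∃ o : ℕ, Odd o ∧ ∃ z : ℤ, (o : ℝ) * x = 2 ^ m * z

lemma irVal_add {m : ℕ} {x y : ℝ} (hx : irVal m x) (hy : irVal m y) : irVal m (x + y) := by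
  obtain ⟨o, ho, z, h⟩ := hx
  obtain ⟨o', ho', z', h'⟩ := hy
  refine ⟨o * o', ho.mul ho', o' * z + o * z', ?_⟩
  push_cast
  linear_combination o' * h + o * h'

lemma irVal_mul {m m' : ℕ} {x y : ℝ} (hx : irVal m x) (hy : irVal m' y) : irVal (m + m') (x * y) := by
  obtain ⟨o, ho, z, h⟩ := hx
  obtain ⟨o', ho', z', h'⟩ := hy
  refine ⟨o * o', ho.mul ho', z * z', ?_⟩
  push_cast
  rw [pow_add]
  linear_combination (o' * y) * h + (2 ^ m * z) * h'

lemma irVal_mono {m m' : ℕ} {x : ℝ} (hx : irVal m x) (h : m' ≤ m) : irVal m' x := by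
  obtain ⟨o, ho, z, hz⟩ := hx
  refine ⟨o, ho, 2 ^ (m - m') * z, ?_⟩
  push_cast
  rw [hz, ← mul_assoc, ← pow_add, Nat.add_sub_cancel' h]

lemma irVal_int (z : ℤ) : irVal 0 (z : ℝ) := ⟨1, odd_one, z, by simp⟩

lemma irVal_pow (m : ℕ) : irVal m (2 ^ m : ℝ) := ⟨1, odd_one, 1, by simp⟩

lemma irVal_zero (m : ℕ) : irVal m 0 := ⟨1, odd_one, 0, by simp⟩

lemma irVal_inv (b : ℕ) : irVal 0 (1 / (2 * b + 1 : ℝ)) := by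
  refine ⟨2 * b + 1, ⟨b, rfl⟩, 1, ?_⟩
  push_cast
  field_simp

lemma irVal_sum {m : ℕ} (s : Finset ℕ) (f : ℕ → ℝ) (h : ∀ i ∈ s, irVal m (f i)) :
    irVal m (∑ i ∈ s, f i) := by
  induction s using Finset.induction_on with
  | empty => simpa using irVal_zero m
  | insert a s ha ih =>
    rw [Finset.sum_insert ha]
    exact irVal_add (h _ (Finset.mem_insert_self _ _))
      (ih fun i hi ↦ h i (Finset.mem_insert_of_mem hi))

noncomputable def irW (k : ℕ) : ℝ := 2 / (2 * k + 1)

noncomputable def irE : ℕ → ℝ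
  | 0 => 0
  | k + 1 => 15 * irE k + irW k

lemma irD_irW (a : ℕ) : ∀ b, irD irW (a + 1) b =
    2 * (a + 1) / (2 * b + 1) * irD irW a (b + 1) := by
  induction a with
  | zero =>
    intro b
    simp only [irD, irW]
    push_cast
    have : (2 * (b:ℝ) + 1) ≠ 0 := by positivity
    have : (2 * ((b:ℝ) + 1) + 1) ≠ 0 := by positivity
    field_simp
    ring
  | succ a ih =>
    intro b
    have h1 := ih b
    have h2 := ih (b + 1)
    rw [irD, h1]
    rw [h2]
    have h3 : irD irW a (b + 1) = irD irW (a + 1) (b + 1) + irD irW a (b + 1 + 1) := by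
      rw [irD]; ring
    rw [h3, h2]
    have : (2 * (b:ℝ) + 1) ≠ 0 := by positivity
    have : (2 * ((b:ℝ) + 1) + 1) ≠ 0 := by positivity
    push_cast
    field_simp
    ring

lemma irD_irW_val (a : ℕ) : ∀ b, irVal (a + 1) (irD irW a b) := by
  induction a with
  | zero =>
    intro b
    have := irVal_mul (irVal_pow 1) (irVal_inv b)
    simp only [irD, irW]
    convert this using 1
    ring
  | succ a ih =>
    intro b
    have := irVal_mul (irVal_mul (irVal_pow 1) (irVal_mul (irVal_int (a + 1)) (irVal_inv b))) (ih (b + 1))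
    rw [irD_irW]
    convert this using 1
    · ring
    · push_cast; ring

lemma irD_irE (a : ℕ) : ∀ b, irD irE a (b + 1) = 15 * irD irE a b + irD irW a b := by
  induction a with
  | zero => intro b; simp [irD, irE]
  | succ a ih =>
    intro b
    have h1 := ih b
    have h2 := ih (b + 1)
    simp only [irD]
    linear_combination h1 - h2

lemma irD_irE_val (a : ℕ) : ∀ b, irVal a (irD irE a b) := by
  induction a with
  | zero =>
    intro b
    simp only [irD]
    induction b with
    | zero => exact irVal_zero 0
    | succ b ih =>
      rw [irE]
      exact irVal_add (irVal_mul (irVal_int 15) ih) (irVal_mono (irD_irW_val 0 b) (by simp))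
  | succ a ih =>
    intro b
    have h : irD irE (a + 1) b = 2 ^ 1 * (((-7 : ℤ) : ℝ) * irD irE a b) + ((-1 : ℤ) : ℝ) * irD irW a b := by
      rw [irD, irD_irE]; push_cast; ring
    rw [h]
    refine irVal_add ?_ ?_
    · have := irVal_mul (irVal_pow 1) (irVal_mul (irVal_int (-7)) (ih b))
      convert this using 1
      ring
    · have := irVal_mul (irVal_int (-1)) (irD_irW_val a b)
      convert this using 1
      ring

lemma irD_pow (a : ℕ) : ∀ b, irD (fun k ↦ (15:ℝ) ^ k) a b = 15 ^ b * (-14) ^ a := by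
  induction a with
  | zero => intro b; simp [irD]
  | succ a ih => intro b; rw [irD, ih, ih, pow_succ, pow_succ]; ring

lemma irD_pow_val (a b : ℕ) : irVal a (irD (fun k ↦ (15:ℝ) ^ k) a b) := by
  refine ⟨1, odd_one, 15 ^ b * (-7) ^ a, ?_⟩
  rw [irD_pow]
  push_cast
  rw [show (-14 : ℝ) = 2 * (-7) by norm_num, mul_pow]
  ring

lemma irS_val (A B C : ℕ) (e : ℕ → ℝ) (he : ∀ a b, irVal a (irD e a b)) : irVal A (irS A B C e) := by
  rw [irV]
  apply irVal_sum
  intro j _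
  have h := irVal_mul (irVal_pow (2 * j)) (irVal_mul (irVal_int (irH B (C - j) * (A.choose j * (-1) ^ j)))
    (he (A - j) j))
  refine irVal_mono (m := 2 * j + (0 + (A - j))) ?_ (by omega)
  convert h using 1
  rw [pow_mul]
  push_cast
  norm_num
  ring

lemma irE_int {N k : ℕ} (hk : 2 * k ≤ N) : ∃ z : ℤ, (Nat.lcmUpto N : ℝ) * irE k = z := by
  induction k with
  | zero => exact ⟨0, by simp [irE]⟩
  | succ k ih =>
    obtain ⟨z, hz⟩ := ih (by omega)
    have hd : (2 * k + 1) ∣ Nat.lcmUpto N := by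
      unfold Nat.lcmUpto
      exact Finset.dvd_lcm (f := id) (Finset.mem_Icc.mpr ⟨by omega, by omega⟩)
    obtain ⟨d, hd⟩ := hd
    refine ⟨15 * z + 2 * d, ?_⟩
    rw [irE, mul_add]
    have : (Nat.lcmUpto N : ℝ) * irW k = 2 * d := by
      rw [hd, irW]; push_cast
      field_simp
    rw [this]
    push_cast
    linear_combination 15 * hz

lemma irS_int (A B C P : ℕ) (l : ℕ) (e : ℕ → ℝ) (he : ∀ k ≤ A, ∃ z : ℤ, (l : ℝ) * e k = z)
    (hP : ∀ k ≤ A, (P : ℤ) ∣ A.choose k * irH (B + k) C) :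
    ∃ z : ℤ, (l : ℝ) * irS A B C e = P * z := by
  unfold irS
  have : ∀ s : Finset ℕ, (∀ k ∈ s, k ≤ A) → ∃ z : ℤ, (l : ℝ) *
      ∑ k ∈ s, (-1 : ℝ) ^ k * A.choose k * irH (B + k) C * e k = P * z := by
    intro s
    induction s using Finset.induction_on with
    | empty => intro _; exact ⟨0, by simp⟩
    | insert a s ha ih =>
      intro hs
      obtain ⟨z, hz⟩ := ih fun k hk ↦ hs k (Finset.mem_insert_of_mem hk)
      obtain ⟨y, hy⟩ := he a (hs a (Finset.mem_insert_self _ _))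
      obtain ⟨w, hw⟩ := hP a (hs a (Finset.mem_insert_self _ _))
      refine ⟨(-1) ^ a * w * y + z, ?_⟩
      rw [Finset.sum_insert ha, mul_add, hz]
      have hw' : (A.choose a : ℝ) * irH (B + a) C = P * w := by exact_mod_cast hw
      push_cast
      linear_combination ((-1) ^ a * (l * e a)) * hw' + ((-1) ^ a * P * w) * hy
  exact this _ fun k hk ↦ by have := Finset.mem_range.mp hk; omega

lemma ir_gcd {A P l : ℕ} {X : ℝ} (hP : Odd P) (hX : irVal A X) (h : ∃ z : ℤ, (l : ℝ) * X = P * z) :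
    ∃ z : ℤ, (l : ℝ) * X = 2 ^ A * P * z := by
  obtain ⟨o, ho, y, hy⟩ := hX
  obtain ⟨z, hz⟩ := h
  have h1 : ((o * P : ℕ) : ℤ) * z = 2 ^ A * (l * y) := by
    have : (((o * P : ℕ) : ℤ) * z : ℝ) = 2 ^ A * (l * y) := by
      push_cast
      linear_combination l * hy - o * hz
    exact_mod_cast this
  have hc : IsCoprime ((2 : ℤ) ^ A) ((o * P : ℕ) : ℤ) := by
    apply IsCoprime.pow_left
    have := (Nat.coprime_two_left.mpr (ho.mul hP))
    exact_mod_cast Nat.isCoprime_iff_coprime.mpr this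
  obtain ⟨w, hw⟩ := hc.dvd_of_dvd_mul_left (Dvd.intro _ h1.symm)
  refine ⟨w, ?_⟩
  rw [hz, hw]
  push_cast
  ring

open MeasureTheory Filter Topology

lemma ir_padic_fact {p m : ℕ} (hp : p.Prime) (h : m < p ^ 2) :
    padicValNat p m.factorial = m / p := by
  have := Fact.mk hp
  rw [padicValNat_factorial (b := 2)]
  · simp
  · by_cases hm : m = 0
    · simp [hm]
    · exact Nat.log_lt_of_lt_pow hm h

lemma ir_floor {p c k : ℕ} (hp : 0 < p) (h1 : p ≤ 2 * (c % p)) (h2 : 2 * (k % p) < p) :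
    (c + k) / p + (2 * k) / p + c / p + 1 ≤ (2 * (c + k)) / p + k / p := by
  have hc := Nat.div_add_mod c p
  have hk := Nat.div_add_mod k p
  have hc0 := Nat.mod_lt c hp
  set c1 := c / p
  set k1 := k / p
  set c0 := c % p
  set k0 := k % p
  have e1 : (c + k) / p = c1 + k1 + (c0 + k0) / p := by
    rw [← hc, ← hk, show p * c1 + c0 + (p * k1 + k0) = c0 + k0 + p * (c1 + k1) by ring,
      Nat.add_mul_div_left _ _ hp]
    ring
  have e2 : (2 * k) / p = 2 * k1 := by
    rw [← hk, show 2 * (p * k1 + k0) = 2 * k0 + p * (2 * k1) by ring,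
      Nat.add_mul_div_left _ _ hp, Nat.div_eq_of_lt h2]
    ring
  have e3 : (2 * (c + k)) / p = 2 * c1 + 2 * k1 + (2 * (c0 + k0)) / p := by
    rw [← hc, ← hk, show 2 * (p * c1 + c0 + (p * k1 + k0)) = 2 * (c0 + k0) + p * (2 * c1 + 2 * k1) by ring,
      Nat.add_mul_div_left _ _ hp]
    ring
  rw [e1, e2, e3]
  by_cases hs : c0 + k0 < p
  · rw [Nat.div_eq_of_lt hs]
    have : 1 ≤ (2 * (c0 + k0)) / p := by
      rw [Nat.one_le_div_iff hp]; omega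
    omega
  · have a1 : (c0 + k0) / p < 2 := by
      rw [Nat.div_lt_iff_lt_mul hp]; omega
    have : 2 ≤ (2 * (c0 + k0)) / p := by
      rw [Nat.le_div_iff_mul_le hp]; omega
    omega

lemma ir_prime_dvd {n p k : ℕ} (hp : p.Prime) (hk : k ≤ 7 * n) (hpn : 26 * n < p ^ 2)
    (h1 : p ≤ 2 * ((6 * n) % p)) (h2 : 2 * ((7 * n) % p) < p) :
    (p : ℤ) ∣ (7 * n).choose k * irH (6 * n + k) (6 * n) := by
  have := Fact.mk hp
  by_cases hkp : (7 * n) % p < k % p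
  · apply Dvd.dvd.mul_right
    have h := Choose.choose_modEq_choose_mod_mul_choose_div_nat (n := 7 * n) (k := k) (p := p)
    rw [Nat.choose_eq_zero_of_lt hkp, zero_mul] at h
    exact_mod_cast (Nat.modEq_zero_iff_dvd.mp h)
  · apply Dvd.dvd.mul_left
    have hf := irH_fact (6 * n + k) (6 * n) (by omega)
    have h0 := (irH_nonneg (6 * n + k) (6 * n) (by omega)).1
    obtain ⟨a, ha⟩ := Int.eq_ofNat_of_zero_le h0
    rw [ha] at hf ⊢
    rw [Nat.add_sub_cancel_left] at hf
    have hf' : a * ((6 * n + k).factorial * (2 * k).factorial * (6 * n).factorial) =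
      (2 * (6 * n + k)).factorial * k.factorial := by exact_mod_cast hf
    have ha0 : a ≠ 0 := by
      rintro rfl
      rw [zero_mul] at hf'
      have : 0 < (2 * (6 * n + k)).factorial * k.factorial := by positivity
      omega
    have hv := congrArg (padicValNat p) hf'
    have f1 := Nat.factorial_ne_zero (6 * n + k)
    have f2 := Nat.factorial_ne_zero (2 * k)
    have f3 := Nat.factorial_ne_zero (6 * n)
    have f4 := Nat.factorial_ne_zero (2 * (6 * n + k))
    have f5 := Nat.factorial_ne_zero k
    rw [padicValNat.mul ha0 (by positivity), padicValNat.mul (by positivity) f3,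
      padicValNat.mul f1 f2, padicValNat.mul f4 f5, ir_padic_fact hp (by omega),
      ir_padic_fact hp (by omega), ir_padic_fact hp (by omega), ir_padic_fact hp (by omega),
      ir_padic_fact hp (by omega)] at hv
    have := ir_floor hp.pos h1 (show 2 * (k % p) < p by omega)
    have : 1 ≤ padicValNat p a := by omega
    exact_mod_cast dvd_of_one_le_padicValNat this

/-- the set of good primes -/
def irOm (n : ℕ) : Finset ℕ := (Finset.range (7 * n + 1)).filter fun p ↦
  p.Prime ∧ p ≠ 2 ∧ 26 * n < p ^ 2 ∧ p ≤ 2 * ((6 * n) % p) ∧ 2 * ((7 * n) % p) < p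

def irP (n : ℕ) : ℕ := ∏ p ∈ irOm n, p

lemma irP_odd (n : ℕ) : Odd (irP n) := by
  unfold irP
  apply Finset.prod_induction _ Odd (fun a b ha hb ↦ ha.mul hb) odd_one
  intro p hp
  simp only [irOm, Finset.mem_filter] at hp
  exact hp.2.1.odd_of_ne_two hp.2.2.1

lemma irP_pos (n : ℕ) : 0 < irP n := (irP_odd n).pos

lemma irP_dvd (n k : ℕ) (hk : k ≤ 7 * n) :
    (irP n : ℤ) ∣ (7 * n).choose k * irH (6 * n + k) (6 * n) := by
  rw [Int.natCast_dvd]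
  unfold irP
  apply Finset.prod_primes_dvd
  · intro p hp
    simp only [irOm, Finset.mem_filter] at hp
    exact hp.2.1.prime
  · intro p hp
    simp only [irOm, Finset.mem_filter] at hp
    obtain ⟨_, a, b, c, d, e⟩ := hp
    rw [← Int.natCast_dvd]
    exact ir_prime_dvd a hk c d e

lemma irP_log (n : ℕ) : Real.log (irP n) = ∑ p ∈ irOm n, Real.log p := by
  unfold irP
  push_cast
  rw [Real.log_prod]
  intro p hp
  simp only [irOm, Finset.mem_filter] at hp
  exact_mod_cast hp.2.1.ne_zero

/-- partial log sums -/
noncomputable def irG (n : ℕ) (x : ℝ) : ℝ := ∑ p ∈ (irOm n).filter (fun p : ℕ ↦ (p : ℝ) ≤ x), Real.log (p : ℝ)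

lemma irG_mono (n : ℕ) : Monotone (irG n) := by
  intro x y h
  unfold irG
  apply Finset.sum_le_sum_of_subset_of_nonneg
  · intro p hp
    simp only [Finset.mem_filter] at hp ⊢
    exact ⟨hp.1, hp.2.trans h⟩
  · intro p _ _
    exact Real.log_natCast_nonneg p

lemma irG_le (n : ℕ) (x : ℝ) : irG n x ≤ Real.log (irP n) := by
  rw [irP_log]
  unfold irG
  apply Finset.sum_le_sum_of_subset_of_nonneg (Finset.filter_subset _ _)
  intro p _ _
  exact Real.log_natCast_nonneg p

lemma irG_step (n : ℕ) (x y : ℝ) (hx : 0 ≤ x) (hxy : x ≤ y)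
    (h : ∀ p : ℕ, p.Prime → x < p → (p : ℝ) ≤ y → p ∈ irOm n) :
    irG n x + (Chebyshev.theta y - Chebyshev.theta x) ≤ irG n y := by
  have e : Chebyshev.theta y - Chebyshev.theta x =
      ∑ p ∈ (Finset.Ioc ⌊x⌋₊ ⌊y⌋₊).filter Nat.Prime, Real.log p := by
    unfold Chebyshev.theta
    rw [sub_eq_iff_eq_add', ← Finset.sum_union]
    · congr 1
      rw [← Finset.filter_union, Finset.Ioc_union_Ioc_eq_Ioc (Nat.zero_le _) (Nat.floor_mono hxy)]
    · rw [Finset.disjoint_left]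
      intro p h1 h2
      simp only [Finset.mem_filter, Finset.mem_Ioc] at h1 h2
      omega
  rw [e]
  unfold irG
  rw [← Finset.sum_union]
  · apply Finset.sum_le_sum_of_subset_of_nonneg
    · intro p hp
      simp only [Finset.mem_union, Finset.mem_filter, Finset.mem_Ioc] at hp ⊢
      rcases hp with hp | ⟨⟨h1, h2⟩, h3⟩
      · exact ⟨hp.1, hp.2.trans hxy⟩
      · have h4 : (p : ℝ) ≤ y := (Nat.le_floor_iff (hx.trans hxy)).mp h2
        have h5 : x < p := (Nat.floor_lt hx).mp h1
        exact ⟨h p h3 h5 h4, h4⟩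
    · intro p _ _
      exact Real.log_natCast_nonneg p
  · rw [Finset.disjoint_left]
    intro p h1 h2
    simp only [Finset.mem_filter, Finset.mem_Ioc] at h1 h2
    have := (Nat.floor_lt hx).mp h2.1.1
    linarith [h1.2]

lemma irOm_mem {n p : ℕ} (hp : p.Prime) (hn : 100 ≤ n) (i j : ℕ) (h0 : 6 * n < 10 * p)
    (h1 : (2 * i + 1) * p ≤ 12 * n) (h2 : 6 * n < (i + 1) * p) (h3 : j * p ≤ 7 * n)
    (h4 : 14 * n < (2 * j + 1) * p) (hj : 1 ≤ j) : p ∈ irOm n := by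
  have e1 : (6 * n) % p = 6 * n - i * p := by
    rw [Nat.mod_eq_iff]
    right
    refine ⟨?_, i, ?_⟩
    · rw [add_mul] at h2; omega
    · rw [add_mul] at h1
      have : p * i ≤ 6 * n := by nlinarith
      rw [mul_comm i p]; omega
  have e2 : (7 * n) % p = 7 * n - j * p := by
    rw [Nat.mod_eq_iff]
    right
    refine ⟨?_, j, ?_⟩
    · rw [add_mul, mul_assoc] at h4; omega
    · rw [mul_comm p j]; omega
  simp only [irOm, Finset.mem_filter, Finset.mem_range]
  refine ⟨by nlinarith, hp, by omega, by nlinarith, ?_, ?_⟩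
  · rw [e1]
    rw [add_mul, mul_assoc] at h1; omega
  · rw [e2]
    rw [add_mul, mul_assoc] at h4; omega

lemma irG_int {n : ℕ} (hn : 100 ≤ n) (i j : ℕ) (a b : ℝ) (ha : 0.6 ≤ a) (hab : a ≤ b)
    (h1 : (2 * i + 1) * b ≤ 12) (h2 : 6 ≤ (i + 1) * a) (h3 : j * b ≤ 7)
    (h4 : 14 ≤ (2 * j + 1) * a) (hj : 1 ≤ j) :
    irG n (a * n) + (Chebyshev.theta (b * n) - Chebyshev.theta (a * n)) ≤ irG n (b * n) := by
  have hn0 : (0:ℝ) < n := by exact_mod_cast (show 0 < n by omega)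
  refine irG_step n _ _ (by positivity) (by gcongr) fun p hp hx hy ↦ ?_
  refine irOm_mem hp hn i j ?_ ?_ ?_ ?_ ?_ hj
  · have : (6 * n : ℝ) < 10 * p := by nlinarith
    exact_mod_cast this
  · have : ((2 * i + 1) * p : ℝ) ≤ 12 * n := by
      calc ((2 * i + 1) * p : ℝ) ≤ (2 * i + 1) * (b * n) := by gcongr
        _ = ((2 * i + 1) * b) * n := by ring
        _ ≤ 12 * n := by gcongr
    exact_mod_cast this
  · have : (6 * n : ℝ) < (i + 1) * p := by
      calc (6 * n : ℝ) ≤ ((i + 1) * a) * n := by gcongr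
        _ = (i + 1) * (a * n) := by ring
        _ < (i + 1) * p := by gcongr
    exact_mod_cast this
  · have : (j * p : ℝ) ≤ 7 * n := by
      calc (j * p : ℝ) ≤ j * (b * n) := by gcongr
        _ = (j * b) * n := by ring
        _ ≤ 7 * n := by gcongr
    exact_mod_cast this
  · have : (14 * n : ℝ) < (2 * j + 1) * p := by
      calc (14 * n : ℝ) ≤ ((2 * j + 1) * a) * n := by gcongr
        _ = (2 * j + 1) * (a * n) := by ring
        _ < (2 * j + 1) * p := by gcongr
    exact_mod_cast this

lemma irP_lower {n : ℕ} (hn : 100 ≤ n) :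
    (Chebyshev.theta (12/19 * n) - Chebyshev.theta (14/23 * n)) +
    (Chebyshev.theta (7/10 * n) - Chebyshev.theta (2/3 * n)) +
    (Chebyshev.theta (7/9 * n) - Chebyshev.theta (3/4 * n)) +
    (Chebyshev.theta (4/3 * n) - Chebyshev.theta (14/11 * n)) +
    (Chebyshev.theta (12/7 * n) - Chebyshev.theta (14/9 * n)) +
    (Chebyshev.theta (7/3 * n) - Chebyshev.theta (2 * n)) +
    (Chebyshev.theta (7/2 * n) - Chebyshev.theta (3 * n)) +
    (Chebyshev.theta (7 * n) - Chebyshev.theta (6 * n)) ≤ Real.log (irP n) := by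
  have hn0 : (0:ℝ) < n := by exact_mod_cast (show 0 < n by omega)
  have g0 : 0 ≤ irG n (14/23 * n) := by
    unfold irG
    exact Finset.sum_nonneg fun p _ ↦ Real.log_natCast_nonneg p
  have m : ∀ a b : ℝ, a ≤ b → irG n (a * n) ≤ irG n (b * n) := by
    intro a b h
    exact irG_mono n (by gcongr)
  have s1 := irG_int hn 9 11 (14/23) (12/19) (by norm_num) (by norm_num) (by norm_num) (by norm_num)
    (by norm_num) (by norm_num) (by norm_num)
  have s2 := irG_int hn 8 10 (2/3) (7/10) (by norm_num) (by norm_num) (by norm_num) (by norm_num)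
    (by norm_num) (by norm_num) (by norm_num)
  have s3 := irG_int hn 7 9 (3/4) (7/9) (by norm_num) (by norm_num) (by norm_num) (by norm_num)
    (by norm_num) (by norm_num) (by norm_num)
  have s4 := irG_int hn 4 5 (14/11) (4/3) (by norm_num) (by norm_num) (by norm_num) (by norm_num)
    (by norm_num) (by norm_num) (by norm_num)
  have s5 := irG_int hn 3 4 (14/9) (12/7) (by norm_num) (by norm_num) (by norm_num) (by norm_num)
    (by norm_num) (by norm_num) (by norm_num)
  have s6 := irG_int hn 2 3 2 (7/3) (by norm_num) (by norm_num) (by norm_num) (by norm_num)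
    (by norm_num) (by norm_num) (by norm_num)
  have s7 := irG_int hn 1 2 3 (7/2) (by norm_num) (by norm_num) (by norm_num) (by norm_num)
    (by norm_num) (by norm_num) (by norm_num)
  have s8 := irG_int hn 0 1 6 7 (by norm_num) (by norm_num) (by norm_num) (by norm_num)
    (by norm_num) (by norm_num) (by norm_num)
  have m1 := m (12/19) (2/3) (by norm_num)
  have m2 := m (7/10) (3/4) (by norm_num)
  have m3 := m (7/9) (14/11) (by norm_num)
  have m4 := m (4/3) (14/9) (by norm_num)
  have m5 := m (12/7) 2 (by norm_num)
  have m6 := m (7/3) 3 (by norm_num)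
  have m7 := m (7/2) 6 (by norm_num)
  have := irG_le n (7 * n)
  linarith

/-- the multiplier -/
noncomputable def irs (n : ℕ) : ℝ := Nat.lcmUpto (14 * n) * 2 ^ (5 * n) / irP n

lemma irs_pos (n : ℕ) : 0 < irs n := by
  have h1 : (0:ℝ) < Nat.lcmUpto (14 * n) := by exact_mod_cast Nat.lcmUpto_pos _
  have h2 : (0:ℝ) < irP n := by exact_mod_cast irP_pos n
  unfold irs
  positivity

lemma irs_bound : ∀ᶠ n : ℕ in atTop, irs n ≤ Real.exp (15.335 * n) := by
  have hθ : ∀ c : ℝ, 0 < c → Tendsto (fun n : ℕ ↦ Chebyshev.theta (c * n) / n) atTop (𝓝 c) := by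
    intro c hc
    have h := (pnt_theta.comp (tendsto_natCast_atTop_atTop.const_mul_atTop hc)).const_mul c
    rw [mul_one] at h
    refine h.congr fun n ↦ ?_
    simp only [Function.comp]
    field_simp
  have hψ : Tendsto (fun n : ℕ ↦ Chebyshev.psi (14 * n) / n) atTop (𝓝 14) := by
    have h := (pnt_psi.comp (tendsto_natCast_atTop_atTop.const_mul_atTop
      (show (0:ℝ) < 14 by norm_num))).const_mul 14
    rw [mul_one] at h
    refine h.congr fun n ↦ ?_
    simp only [Function.comp]
    field_simp
  have T := ((((((((hθ (12/19) (by norm_num)).sub (hθ (14/23) (by norm_num))).add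
    ((hθ (7/10) (by norm_num)).sub (hθ (2/3) (by norm_num)))).add
    ((hθ (7/9) (by norm_num)).sub (hθ (3/4) (by norm_num)))).add
    ((hθ (4/3) (by norm_num)).sub (hθ (14/11) (by norm_num)))).add
    ((hθ (12/7) (by norm_num)).sub (hθ (14/9) (by norm_num)))).add
    ((hθ (7/3) (by norm_num)).sub (hθ 2 (by norm_num)))).add
    ((hθ (7/2) (by norm_num)).sub (hθ 3 (by norm_num)))).add
    ((hθ 7 (by norm_num)).sub (hθ 6 (by norm_num)))
  have T2 := (hψ.sub T).eventually_lt_const (u := 15.335 - 5 * Real.log 2)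
    (by have := Real.log_two_lt_d9; norm_num at *; linarith)
  filter_upwards [T2, eventually_ge_atTop 100] with n h hn
  have hn0 : (0:ℝ) < n := by exact_mod_cast (show 0 < n by omega)
  have hl := irP_lower hn
  have h1 : (0:ℝ) < Nat.lcmUpto (14 * n) := by exact_mod_cast Nat.lcmUpto_pos _
  have h2 : (0:ℝ) < irP n := by exact_mod_cast irP_pos n
  have hp := irs_pos n
  rw [← Real.log_le_iff_le_exp hp]
  have hlog : Real.log (irs n) = Chebyshev.psi (14 * n) + 5 * n * Real.log 2 - Real.log (irP n) := by
    have := Chebyshev.psi_eq_log_lcmUpto (14 * n)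
    push_cast at this
    unfold irs
    rw [this, Real.log_div (by positivity) h2.ne', Real.log_mul h1.ne' (by positivity), Real.log_pow]
    push_cast
    ring
  rw [hlog]
  simp only [← sub_div, ← add_div] at h
  rw [div_lt_iff₀ hn0] at h
  linarith

open MeasureTheory Filter Topology

noncomputable def irT (k m : ℕ) : ℝ := ∫ x in (-1:ℝ)..1, x ^ (2 * k) / (15 - x ^ 2) ^ m

lemma ir_den {x : ℝ} (hx : x ∈ Set.uIcc (-1:ℝ) 1) : 14 ≤ 15 - x ^ 2 := by
  rw [Set.uIcc_of_le (by norm_num)] at hx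
  nlinarith [hx.1, hx.2]

lemma ir_intble (f : ℝ → ℝ) (hf : Continuous f) (m : ℕ) :
    IntervalIntegrable (fun x ↦ f x / (15 - x ^ 2) ^ m) volume (-1) 1 := by
  apply ContinuousOn.intervalIntegrable
  apply ContinuousOn.div (by fun_prop) (by fun_prop)
  intro x hx
  have := ir_den hx
  positivity

lemma irT_rec (k m : ℕ) : (2 * k + 1) * irT k m + 2 * m * irT (k + 1) (m + 1) = 2 / 14 ^ m := by
  have hd : ∀ x ∈ Set.uIcc (-1:ℝ) 1, HasDerivAt (fun x : ℝ ↦ x ^ (2 * k + 1) / (15 - x ^ 2) ^ m)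
      ((2 * k + 1) * (x ^ (2 * k) / (15 - x ^ 2) ^ m) +
        2 * m * (x ^ (2 * (k + 1)) / (15 - x ^ 2) ^ (m + 1))) x := by
    intro x hx
    have h := ir_den hx
    have h1 : (15 - x ^ 2) ≠ 0 := by linarith
    have d1 : HasDerivAt (fun x : ℝ ↦ 15 - x ^ 2) (-(2 * x)) x := by
      have := ((hasDerivAt_id x).pow 2).const_sub 15
      convert! this using 1
      simp
    have := (hasDerivAt_pow (2 * k + 1) x).div (d1.pow m) (pow_ne_zero m h1)
    convert! this using 1
    cases m with
    | zero => simp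
    | succ m =>
      push_cast
      simp only [Pi.pow_apply, add_tsub_cancel_right]
      field_simp
      ring
  have i1 := (ir_intble (fun x ↦ x ^ (2 * k)) (by fun_prop) m).const_mul (2 * (k:ℝ) + 1)
  have i2 := (ir_intble (fun x ↦ x ^ (2 * (k + 1))) (by fun_prop) (m + 1)).const_mul (2 * (m:ℝ))
  have := intervalIntegral.integral_eq_sub_of_hasDerivAt hd (i1.add i2)
  rw [intervalIntegral.integral_add i1 i2, intervalIntegral.integral_const_mul,
    intervalIntegral.integral_const_mul] at this
  unfold irT
  rw [this]
  have e : (-1:ℝ) ^ (2 * k + 1) = -1 := by rw [pow_succ, pow_mul]; norm_num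
  rw [e]
  norm_num
  ring

lemma irD_one (a : ℕ) : ∀ b, irD (fun _ ↦ (1:ℝ)) (a + 1) b = 0 := by
  induction a with
  | zero => intro b; simp [irD]
  | succ a ih => intro b; rw [irD, ih, ih]; simp

lemma irS_one (A B C : ℕ) (h : C < A) : irS A B C (fun _ ↦ 1) = 0 := by
  rw [irV]
  apply Finset.sum_eq_zero
  intro j hj
  have := Finset.mem_range.mp hj
  obtain ⟨a, ha⟩ : ∃ a, A - j = a + 1 := ⟨A - j - 1, by omega⟩
  rw [ha, irD_one]
  simp

noncomputable def irX (A B C m : ℕ) : ℝ := irS A B C (fun k ↦ irT (B + k - C) m)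

lemma irX_rec (A B C m : ℕ) (hA : C < A) (hB : C < B) :
    (C + 1) * irX A B (C + 1) m = -4 * m * irX A B C (m + 1) := by
  have h0 := irS_one A B C hA
  have : (C + 1) * irX A B (C + 1) m + 4 * m * irX A B C (m + 1) =
      4 / 14 ^ m * irS A B C (fun _ ↦ 1) := by
    unfold irX irS
    rw [Finset.mul_sum, Finset.mul_sum, Finset.mul_sum, ← Finset.sum_add_distrib]
    apply Finset.sum_congr rfl
    intro k _
    obtain ⟨r, hr⟩ : ∃ r, B + k = C + 1 + r := ⟨B + k - (C + 1), by omega⟩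
    beta_reduce
    rw [show B + k - (C + 1) = r by omega, show B + k - C = r + 1 by omega]
    have h1 := irH_rec (B + k) C
    have h2 : ((C : ℝ) + 1) * irH (B + k) (C + 1) = 2 * (2 * (B + k : ℕ) - 1 - 2 * C) * irH (B + k) C := by
      exact_mod_cast h1
    rw [hr] at h2 ⊢
    have h3 := irT_rec r m
    push_cast at h2
    linear_combination ((-1) ^ k * A.choose k * irT r m) * h2 +
      (2 * (-1) ^ k * A.choose k * irH (C + 1 + r) C) * h3
  rw [h0, mul_zero] at this
  linarith

lemma irX_eq (A B C : ℕ) : ∀ m, C ≤ A → C ≤ B →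
    (C.factorial : ℝ) * m.factorial * irX A B C (m + 1) =
    (-4) ^ C * (m + C).factorial * irX A B 0 (m + 1 + C) := by
  induction C with
  | zero => intro m _ _; simp
  | succ C ih =>
    intro m hA hB
    have h1 := irX_rec A B C (m + 1) (by omega) (by omega)
    have h2 := ih (m + 1) (by omega) (by omega)
    rw [show m + 1 + 1 + C = m + 1 + (C + 1) by ring, show m + 1 + C = m + (C + 1) by ring,
      Nat.factorial_succ m] at h2
    rw [Nat.factorial_succ C]
    push_cast at *
    rw [pow_succ]
    linear_combination (C.factorial * m.factorial : ℝ) * h1 + (-4) * h2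

lemma irX_zero (A B m : ℕ) : irX A B 0 m =
    ∫ x in (-1:ℝ)..1, x ^ (2 * B) * (1 - x ^ 2) ^ A / (15 - x ^ 2) ^ m := by
  have h1 : irX A B 0 m = irD (fun k ↦ irT k m) A B := by
    rw [irD_eq]
    unfold irX irS
    apply Finset.sum_congr rfl
    intro k _
    beta_reduce
    rw [irH_zero, Nat.sub_zero]
    push_cast
    ring
  rw [h1]
  clear h1
  induction A generalizing B with
  | zero => simp [irD, irT]
  | succ A ih =>
    rw [irD, ih, ih, ← intervalIntegral.integral_sub]
    · apply intervalIntegral.integral_congr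
      intro x _
      simp only
      rw [← sub_div]
      congr 1
      ring
    · exact ir_intble _ (by fun_prop) m
    · exact ir_intble _ (by fun_prop) m

lemma irT_one (k : ℕ) : irT k 1 = 15 ^ k * irT 0 1 - irE k := by
  induction k with
  | zero => simp [irE]
  | succ k ih =>
    have : irT (k + 1) 1 = 15 * irT k 1 - irW k := by
      have hw : irW k = ∫ x in (-1:ℝ)..1, x ^ (2 * k) := by
        have e : (-1:ℝ) ^ (2 * k + 1) = -1 := by rw [pow_succ, pow_mul]; norm_num
        rw [integral_pow, irW, e]
        push_cast
        norm_num
      unfold irT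
      rw [hw, ← intervalIntegral.integral_const_mul, ← intervalIntegral.integral_sub]
      · apply intervalIntegral.integral_congr
        intro x hx
        have := ir_den hx
        have : (15 - x ^ 2) ≠ 0 := by linarith
        simp only
        field_simp
        ring
      · exact (ir_intble (fun x ↦ x ^ (2 * k)) (by fun_prop) 1).const_mul _
      · apply Continuous.intervalIntegrable; fun_prop
    rw [this, ih, irE]
    ring

noncomputable def irDn (n : ℕ) : ℝ := irS (7 * n) (6 * n) (6 * n) (fun k ↦ 15 ^ k)
noncomputable def irEn (n : ℕ) : ℝ := irS (7 * n) (6 * n) (6 * n) irE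
noncomputable def irI (n : ℕ) : ℝ :=
  ∫ x in (-1:ℝ)..1, x ^ (2 * (6 * n)) * (1 - x ^ 2) ^ (7 * n) / (15 - x ^ 2) ^ (6 * n + 1)

lemma ir_form (n : ℕ) : irDn n * irT 0 1 - irEn n = 4 ^ (6 * n) * irI n := by
  have h1 : irX (7 * n) (6 * n) (6 * n) 1 = irDn n * irT 0 1 - irEn n := by
    unfold irX irDn irEn irS
    rw [Finset.sum_mul, ← Finset.sum_sub_distrib]
    apply Finset.sum_congr rfl
    intro k _
    beta_reduce
    rw [Nat.add_sub_cancel_left, irT_one]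
    ring
  have h2 := irX_eq (7 * n) (6 * n) (6 * n) 0 (by omega) le_rfl
  simp only [zero_add, Nat.factorial_zero, Nat.cast_one, mul_one] at h2
  have hf : ((6 * n).factorial : ℝ) ≠ 0 := by positivity
  have h3 : irX (7 * n) (6 * n) (6 * n) 1 = (-4) ^ (6 * n) * irX (7 * n) (6 * n) 0 (1 + 6 * n) := by
    apply mul_left_cancel₀ hf
    linear_combination h2
  rw [← h1, h3, irX_zero, Even.neg_pow (by rw [Nat.even_mul]; left; decide), add_comm 1]
  rfl

lemma ir_alpha : Real.sqrt 15 * Real.log ((Real.sqrt 15 - 1) / (Real.sqrt 15 + 1)) = -15 * irT 0 1 := by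
  set r := Real.sqrt 15 with hr
  have hr2 : r ^ 2 = 15 := Real.sq_sqrt (by norm_num)
  have hr0 : 0 ≤ r := Real.sqrt_nonneg _
  have hr3 : 3 < r := by nlinarith
  have hd : ∀ x ∈ Set.uIcc (-1:ℝ) 1, HasDerivAt
      (fun x : ℝ ↦ (1 / (2 * r)) * (Real.log (r + x) - Real.log (r - x)))
      (x ^ (2 * 0) / (15 - x ^ 2) ^ 1) x := by
    intro x hx
    have h := ir_den hx
    rw [Set.uIcc_of_le (by norm_num)] at hx
    have a1 : r + x ≠ 0 := by linarith [hx.1]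
    have a2 : r - x ≠ 0 := by linarith [hx.2]
    have d1 := ((hasDerivAt_id x).const_add r).log a1
    have d2 := ((hasDerivAt_id x).const_sub r).log a2
    convert! (d1.sub d2).const_mul (1 / (2 * r)) using 1
    simp only [id]
    rw [← hr2]
    have : r ^ 2 - x ^ 2 ≠ 0 := by rw [hr2]; linarith
    field_simp
    ring
  have hi := ir_intble (fun x ↦ x ^ (2 * 0)) (by fun_prop) 1
  have := intervalIntegral.integral_eq_sub_of_hasDerivAt hd hi
  unfold irT
  rw [this, Real.log_div (by linarith) (by linarith), show r + -1 = r - 1 by ring, sub_neg_eq_add]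
  field_simp
  rw [hr2]
  ring

open MeasureTheory Filter Topology

lemma ir_exp_lo (y : ℝ) (hy : 0 < y) (a b : ℕ) (hb : b ≠ 0)
    (h : 1 ≤ (2.7182818283 : ℝ) ^ a * y ^ b) : Real.exp (-(a / b : ℝ)) ≤ y := by
  have hb' : (b:ℝ) ≠ 0 := by exact_mod_cast hb
  rw [← pow_le_pow_iff_left₀ (Real.exp_pos _).le hy.le hb, ← Real.exp_nat_mul,
    show (b:ℝ) * -(a / b) = -(a * 1) by field_simp, Real.exp_neg, Real.exp_nat_mul]
  have h1 : (2.7182818283 : ℝ) ^ a ≤ Real.exp 1 ^ a :=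
    pow_le_pow_left₀ (by norm_num) Real.exp_one_gt_d9.le a
  have h2 : 0 < Real.exp 1 ^ a := by positivity
  rw [inv_le_iff_one_le_mul₀ h2]
  have : 0 < y ^ b := by positivity
  nlinarith

lemma ir_exp_hi (y : ℝ) (hy : 0 < y) (a b : ℕ) (hb : b ≠ 0)
    (h : (2.7182818286 : ℝ) ^ a * y ^ b ≤ 1) : y ≤ Real.exp (-(a / b : ℝ)) := by
  have hb' : (b:ℝ) ≠ 0 := by exact_mod_cast hb
  rw [← pow_le_pow_iff_left₀ hy.le (Real.exp_pos _).le hb, ← Real.exp_nat_mul,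
    show (b:ℝ) * -(a / b) = -(a * 1) by field_simp, Real.exp_neg, Real.exp_nat_mul]
  have h1 : Real.exp 1 ^ a ≤ (2.7182818286 : ℝ) ^ a :=
    pow_le_pow_left₀ (Real.exp_pos _).le Real.exp_one_lt_d9.le a
  have h2 : 0 < Real.exp 1 ^ a := by positivity
  rw [le_inv_comm₀ (by positivity) h2]
  have : 0 < y ^ b := by positivity
  rw [le_inv_comm₀ h2 this, ← one_div, le_div_iff₀ h2]
  nlinarith

noncomputable def irg (t : ℝ) : ℝ := t ^ 6 * (1 - t) ^ 7 / (15 - t) ^ 6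

lemma irg_nonneg {t : ℝ} (h0 : 0 ≤ t) (h1 : t ≤ 1) : 0 ≤ irg t := by
  have : 0 ≤ 1 - t := by linarith
  have : 0 ≤ 15 - t := by linarith
  unfold irg; positivity

set_option exponentiation.threshold 2000 in
lemma irg_le {t : ℝ} (h0 : 0 ≤ t) (h1 : t ≤ 1) : irg t ≤ Real.exp (-25.02) := by
  have e1 : t ≤ (23/49) * Real.exp (t * (49/23) - 1) := by
    have := Real.add_one_le_exp (t * (49/23) - 1)
    linarith
  have e2 : 1 - t ≤ (26/49) * Real.exp ((1 - t) * (49/26) - 1) := by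
    have := Real.add_one_le_exp ((1 - t) * (49/26) - 1)
    linarith
  have e3 : 15 ≤ (15 - t) * Real.exp (0.0691 * t) := by
    have := Real.quadratic_le_exp_of_nonneg (x := 0.0691 * t) (by positivity)
    have : (15 - t) * (1 + 0.0691 * t + (0.0691 * t) ^ 2 / 2) ≤ (15 - t) * Real.exp (0.0691 * t) :=
      mul_le_mul_of_nonneg_left this (by linarith)
    nlinarith [mul_nonneg h0 (sub_nonneg.2 h1), mul_nonneg h0 h0]
  have hp : 0 < 15 - t := by linarith
  have h1t : 0 ≤ 1 - t := by linarith
  have f1 := pow_le_pow_left₀ h0 e1 6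
  have f2 := pow_le_pow_left₀ h1t e2 7
  have f3 := pow_le_pow_left₀ (by norm_num) e3 6
  have f4 : t ^ 6 * (1 - t) ^ 7 ≤ ((23/49) * Real.exp (t * (49/23) - 1)) ^ 6 *
      ((26/49) * Real.exp ((1 - t) * (49/26) - 1)) ^ 7 := by gcongr
  have f5 : irg t ≤ ((23/49) * Real.exp (t * (49/23) - 1)) ^ 6 *
      ((26/49) * Real.exp ((1 - t) * (49/26) - 1)) ^ 7 * (Real.exp (0.0691 * t) ^ 6 / 15 ^ 6) := by
    unfold irg
    rw [div_eq_mul_inv]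
    apply mul_le_mul f4 _ (by positivity) (by positivity)
    rw [inv_le_comm₀ (by positivity) (by positivity), inv_div, div_le_iff₀ (by positivity),
      ← mul_pow]
    exact f3
  have f6 : ((23/49) * Real.exp (t * (49/23) - 1)) ^ 6 *
      ((26/49) * Real.exp ((1 - t) * (49/26) - 1)) ^ 7 * (Real.exp (0.0691 * t) ^ 6 / 15 ^ 6) =
      ((23/49:ℝ) ^ 6 * (26/49) ^ 7 / 15 ^ 6) * Real.exp (6 * (t * (49/23) - 1) +
        7 * ((1 - t) * (49/26) - 1) + 6 * (0.0691 * t)) := by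
    have := fun x : ℝ ↦ (Real.exp_nat_mul x 6)
    have := fun x : ℝ ↦ (Real.exp_nat_mul x 7)
    push_cast at *
    simp only [Real.exp_add, mul_pow, *]
    ring
  rw [f6] at f5
  have f7 : ((23/49:ℝ) ^ 6 * (26/49) ^ 7 / 15 ^ 6) ≤ Real.exp (-((1261:ℕ) / (50:ℕ) : ℝ)) := by
    apply ir_exp_hi _ (by norm_num) _ _ (by norm_num)
    norm_num
  calc irg t ≤ _ := f5
    _ ≤ Real.exp (-((1261:ℕ) / (50:ℕ) : ℝ)) * Real.exp 0.2 := by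
      gcongr
      linarith
    _ = _ := by rw [← Real.exp_add]; norm_num

set_option exponentiation.threshold 2000 in
lemma irg_ge {t : ℝ} (h0 : 0.469225 ≤ t) (h1 : t ≤ 0.46963609) : Real.exp (-25.04) ≤ irg t := by
  have f7 : Real.exp (-((626:ℕ) / (25:ℕ) : ℝ)) ≤
      (0.469225:ℝ) ^ 6 * (1 - 0.46963609) ^ 7 / (15 - 0.469225) ^ 6 := by
    apply ir_exp_lo _ (by norm_num) _ _ (by norm_num)
    norm_num
  rw [show (-25.04:ℝ) = (-((626:ℕ) / (25:ℕ) : ℝ)) by norm_num]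
  apply f7.trans
  unfold irg
  have : 0 < 15 - t := by linarith
  have : (0:ℝ) ≤ 1 - 0.46963609 := by norm_num
  have : 0 ≤ 1 - t := by linarith
  have : 0 ≤ t := by linarith
  gcongr

lemma irI_eq (n : ℕ) : irI n = ∫ x in (-1:ℝ)..1, irg (x ^ 2) ^ n / (15 - x ^ 2) := by
  unfold irI
  apply intervalIntegral.integral_congr
  intro x hx
  have := ir_den hx
  have : (15 - x ^ 2) ≠ 0 := by linarith
  simp only [irg]
  rw [div_pow, mul_pow, div_div, ← pow_mul, ← pow_mul, ← pow_mul, ← pow_mul]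
  ring_nf

lemma irg_intble (n : ℕ) :
    IntervalIntegrable (fun x : ℝ ↦ irg (x ^ 2) ^ n / (15 - x ^ 2)) volume (-1) 1 := by
  apply ContinuousOn.intervalIntegrable
  unfold irg
  have h : ∀ x ∈ Set.uIcc (-1:ℝ) 1, 15 - x ^ 2 ≠ 0 := by
    intro x hx
    have := ir_den hx
    linarith
  apply ContinuousOn.div _ (by fun_prop) h
  apply ContinuousOn.pow
  apply ContinuousOn.div (by fun_prop) (by fun_prop)
  intro x hx
  exact pow_ne_zero _ (h x hx)

lemma irI_le (n : ℕ) : irI n ≤ Real.exp (-25.02 * n) := by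
  rw [irI_eq]
  have : ∫ x in (-1:ℝ)..1, irg (x ^ 2) ^ n / (15 - x ^ 2) ≤
      ∫ x in (-1:ℝ)..1, Real.exp (-25.02) ^ n / 14 := by
    apply intervalIntegral.integral_mono_on (by norm_num) (irg_intble n) (by simp)
    intro x hx
    have h := ir_den (by rwa [Set.uIcc_of_le (by norm_num)] : x ∈ Set.uIcc (-1:ℝ) 1)
    have h2 : x ^ 2 ≤ 1 := by linarith
    have := irg_nonneg (sq_nonneg x) h2
    have := irg_le (sq_nonneg x) h2
    gcongr
  refine this.trans ?_
  rw [intervalIntegral.integral_const, mul_comm, Real.exp_nat_mul]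
  have : 0 < Real.exp (-25.02) ^ n := by positivity
  rw [smul_eq_mul]
  linarith

lemma irI_ge (n : ℕ) : (0.00002 : ℝ) * Real.exp (-25.04 * n) ≤ irI n := by
  rw [irI_eq]
  have hs : ∫ x in (0.685:ℝ)..0.6853, irg (x ^ 2) ^ n / (15 - x ^ 2) ≤
      ∫ x in (-1:ℝ)..1, irg (x ^ 2) ^ n / (15 - x ^ 2) := by
    apply intervalIntegral.integral_mono_interval (by norm_num) (by norm_num) (by norm_num) _
      (irg_intble n)
    filter_upwards [ae_restrict_mem measurableSet_Ioc] with x hx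
    have h2 : x ^ 2 ≤ 1 := by nlinarith [hx.1, hx.2]
    have := irg_nonneg (sq_nonneg x) h2
    have : 0 ≤ 15 - x ^ 2 := by linarith
    simp only [Pi.zero_apply]
    positivity
  refine le_trans ?_ hs
  have : ∫ x in (0.685:ℝ)..0.6853, Real.exp (-25.04) ^ n / 15 ≤
      ∫ x in (0.685:ℝ)..0.6853, irg (x ^ 2) ^ n / (15 - x ^ 2) := by
    apply intervalIntegral.integral_mono_on (by norm_num) (by simp) 
    · apply (irg_intble n).mono_set
      rw [Set.uIcc_of_le (by norm_num), Set.uIcc_of_le (by norm_num)]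
      apply Set.Icc_subset_Icc <;> norm_num
    intro x hx
    have h1 : 0.469225 ≤ x ^ 2 := by nlinarith [hx.1, hx.2]
    have h2 : x ^ 2 ≤ 0.46963609 := by nlinarith [hx.1, hx.2]
    have := irg_ge h1 h2
    have : 0 < 15 - x ^ 2 := by linarith
    have : 15 - x ^ 2 ≤ 15 := by linarith
    have := irg_nonneg (sq_nonneg x) (by linarith)
    gcongr
  refine le_trans ?_ this
  rw [intervalIntegral.integral_const, mul_comm (-25.04), Real.exp_nat_mul, smul_eq_mul]
  linarith

lemma irI_pos (n : ℕ) : 0 < irI n := lt_of_lt_of_le (by positivity) (irI_ge n)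

set_option exponentiation.threshold 2000 in
lemma irDn_le (n : ℕ) : |irDn n| ≤ 4 ^ (6 * n) * Real.exp (27.7 * n) := by
  have h1 : |irDn n| ≤ 4 ^ (6 * n) * ∑ j ∈ Finset.range (6 * n + 1),
      ((6 * n).choose j : ℝ) * (7 * n).choose j * 15 ^ j * 14 ^ (7 * n - j) := by
    unfold irDn
    rw [irV, Finset.mul_sum]
    refine (Finset.abs_sum_le_sum_abs _ _).trans (Finset.sum_le_sum ?_)
    intro j hj
    have hj' : j ≤ 6 * n := by have := Finset.mem_range.mp hj; omega
    rw [irD_pow]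
    have h := irH_nonneg (6 * n) (6 * n - j) (by omega)
    rw [Nat.choose_symm hj'] at h
    have h1 : (0:ℝ) ≤ irH (6 * n) (6 * n - j) := by exact_mod_cast h.1
    have h2 : (irH (6 * n) (6 * n - j) : ℝ) ≤ 4 ^ (6 * n - j) * (6 * n).choose j := by
      exact_mod_cast h.2
    simp only [abs_mul, abs_pow, abs_neg, abs_one, one_pow, Nat.abs_cast, Nat.abs_ofNat, abs_of_nonneg h1]
    have e : (4:ℝ) ^ (6 * n) = 4 ^ j * 4 ^ (6 * n - j) := by
      rw [← pow_add]; congr 1; omega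
    rw [e]
    calc _ = (4 ^ j * ((7 * n).choose j * 15 ^ j * 14 ^ (7 * n - j))) * (irH (6 * n) (6 * n - j) : ℝ) := by
          ring
      _ ≤ (4 ^ j * ((7 * n).choose j * 15 ^ j * 14 ^ (7 * n - j))) *
          (4 ^ (6 * n - j) * (6 * n).choose j) := by gcongr
      _ = _ := by ring
  have h2 : (12:ℝ) ^ (6 * n) * ∑ j ∈ Finset.range (6 * n + 1),
      ((6 * n).choose j : ℝ) * (7 * n).choose j * 15 ^ j * 14 ^ (7 * n - j) ≤
      27 ^ (6 * n) * 26 ^ (7 * n) := by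
    have ea := add_pow (15:ℝ) 12 (6 * n)
    have eb := add_pow (12:ℝ) 14 (7 * n)
    rw [show (27:ℝ) = 15 + 12 by norm_num, show (26:ℝ) = 12 + 14 by norm_num, ea, eb,
      Finset.sum_mul, Finset.mul_sum]
    apply Finset.sum_le_sum
    intro j hj
    have hj' : j ≤ 6 * n := by have := Finset.mem_range.mp hj; omega
    have hs := Finset.single_le_sum (f := fun j ↦ (12:ℝ) ^ j * 14 ^ (7 * n - j) * ((7 * n).choose j))
      (s := Finset.range (7 * n + 1)) (fun i _ ↦ by positivity)
      (Finset.mem_range.mpr (by omega : j < 7 * n + 1))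
    refine le_trans (le_of_eq ?_) (mul_le_mul_of_nonneg_left hs (by positivity))
    have e : (12:ℝ) ^ (6 * n) = 12 ^ j * 12 ^ (6 * n - j) := by
      rw [← pow_add]; congr 1; omega
    rw [e]
    ring
  have h3 : (27:ℝ) ^ (6 * n) * 26 ^ (7 * n) ≤ 12 ^ (6 * n) * Real.exp (27.7 * n) := by
    have f : (27:ℝ) ^ 6 * 26 ^ 7 / 12 ^ 6 ≤ Real.exp 27.7 := by
      rw [← pow_le_pow_iff_left₀ (by positivity) (Real.exp_pos _).le (n := 10) (by norm_num),
        ← Real.exp_nat_mul, show ((10:ℕ):ℝ) * 27.7 = (277:ℕ) * 1 by norm_num, Real.exp_nat_mul]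
      refine le_trans ?_ (pow_le_pow_left₀ (by norm_num) Real.exp_one_gt_d9.le 277)
      norm_num
    have f' : (27:ℝ) ^ 6 * 26 ^ 7 ≤ 12 ^ 6 * Real.exp 27.7 := by
      rw [div_le_iff₀ (by positivity)] at f
      linarith
    rw [mul_comm 27.7, Real.exp_nat_mul, pow_mul, pow_mul, pow_mul, ← mul_pow, ← mul_pow]
    exact pow_le_pow_left₀ (by positivity) f' n
  have h4 := h2.trans h3
  have h5 := le_of_mul_le_mul_left h4 (by positivity)
  exact h1.trans (mul_le_mul_of_nonneg_left h5 (by positivity))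

open MeasureTheory Filter Topology

lemma ir_approx : ∀ᶠ n : ℕ in atTop, ∃ a B : ℤ,
    0 < |(a:ℝ) * (-15 * irT 0 1) + B| ∧
    |(a:ℝ) * (-15 * irT 0 1) + B| ≤ 15 * Real.exp (-9.685 * n) ∧
    |(a:ℝ)| ≤ Real.exp (43.035 * n) ∧
    |(a:ℝ)| * (0.0003 * Real.exp (-52.74 * n)) ≤ |(a:ℝ) * (-15 * irT 0 1) + B| := by
  filter_upwards [irs_bound] with n hn
  have hP := irP_pos n
  have hPr : (0:ℝ) < irP n := by exact_mod_cast hP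
  have hl : (0:ℝ) < Nat.lcmUpto (14 * n) := by exact_mod_cast Nat.lcmUpto_pos (14 * n)
  obtain ⟨a, ha⟩ : ∃ z : ℤ, (Nat.lcmUpto (14 * n) : ℝ) * irDn n = 2 ^ (7 * n) * irP n * z := by
    apply ir_gcd (irP_odd n)
    · exact irS_val _ _ _ _ irD_pow_val
    · apply irS_int
      · intro k _
        exact ⟨Nat.lcmUpto (14 * n) * 15 ^ k, by push_cast; ring⟩
      · intro k hk
        exact irP_dvd n k hk
  obtain ⟨b, hb⟩ : ∃ z : ℤ, (Nat.lcmUpto (14 * n) : ℝ) * irEn n = 2 ^ (7 * n) * irP n * z := by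
    apply ir_gcd (irP_odd n)
    · exact irS_val _ _ _ _ irD_irE_val
    · apply irS_int
      · intro k hk
        exact irE_int (by omega)
      · intro k hk
        exact irP_dvd n k hk
  have hs := irs_pos n
  have hI := irI_pos n
  have hs4 : (4:ℝ) ^ (6 * n) = 2 ^ (7 * n) * 2 ^ (5 * n) := by
    rw [← pow_add, show (4:ℝ) = 2 ^ 2 by norm_num, ← pow_mul]; congr 1; ring
  have hsl : irs n * irP n = Nat.lcmUpto (14 * n) * 2 ^ (5 * n) := by
    unfold irs; field_simp
  have hf := ir_form n
  have h2 : (0:ℝ) < 2 ^ (7 * n) * irP n := by positivity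
  have key : (a:ℝ) * irT 0 1 - b = irs n * irI n := by
    apply mul_left_cancel₀ h2.ne'
    rw [hs4] at hf
    linear_combination (-irT 0 1) * ha + hb + Nat.lcmUpto (14 * n) * hf -
      2 ^ (7 * n) * irI n * hsl
  have habs : |(a:ℝ)| ≤ irs n * Real.exp (27.7 * n) := by
    have := irDn_le n
    have e : 2 ^ (7 * n) * irP n * |(a:ℝ)| = Nat.lcmUpto (14 * n) * |irDn n| := by
      have := congrArg abs ha
      rw [abs_mul, abs_mul, abs_of_pos h2, abs_of_pos hl] at this
      exact this.symm
    apply le_of_mul_le_mul_left _ h2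
    rw [e]
    calc _ ≤ (Nat.lcmUpto (14 * n) : ℝ) * (4 ^ (6 * n) * Real.exp (27.7 * n)) := by gcongr
      _ = _ := by
        rw [hs4]
        linear_combination (-2 ^ (7 * n) * Real.exp (27.7 * n)) * hsl
  have hD : |(a:ℝ) * (-15 * irT 0 1) + ((15 * b : ℤ) : ℝ)| = 15 * (irs n * irI n) := by
    rw [← abs_of_pos (by positivity : 0 < 15 * (irs n * irI n)), ← abs_neg]
    congr 1
    push_cast
    linear_combination 15 * key
  refine ⟨a, 15 * b, ?_, ?_, ?_, ?_⟩
  · rw [hD]; positivity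
  · rw [hD]
    have := irI_le n
    have h : irs n * irI n ≤ Real.exp (15.335 * n) * Real.exp (-25.02 * n) := by gcongr
    rw [← Real.exp_add, show (15.335 * n + -25.02 * n : ℝ) = -9.685 * n by ring] at h
    linarith
  · refine habs.trans ?_
    calc _ ≤ Real.exp (15.335 * n) * Real.exp (27.7 * n) := by gcongr
      _ = _ := by rw [← Real.exp_add]; congr 1; ring
  · rw [hD]
    have := irI_ge n
    calc _ ≤ irs n * Real.exp (27.7 * n) * (0.0003 * Real.exp (-52.74 * n)) := by gcongr
      _ = irs n * (0.0003 * Real.exp (-25.04 * n)) := by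
        rw [show (-25.04 * n : ℝ) = 27.7 * n + -52.74 * n by ring, Real.exp_add]; ring
      _ ≤ irs n * (15 * irI n) := mul_le_mul_of_nonneg_left (by linarith) hs.le
      _ = _ := by ring

lemma ir_lower (α : ℝ) (h : ∀ᶠ n : ℕ in atTop, ∃ a B : ℤ,
    0 < |(a:ℝ) * α + B| ∧ |(a:ℝ) * α + B| ≤ 15 * Real.exp (-9.685 * n) ∧
    |(a:ℝ)| ≤ Real.exp (43.035 * n) ∧
    |(a:ℝ)| * (0.0003 * Real.exp (-52.74 * n)) ≤ |(a:ℝ) * α + B|) (κ : ℝ) (hκ : κ > 5.45249) :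
    ∀ᶠ q : ℕ in atTop, ∀ p : ℤ, (q:ℝ) ^ (-κ) ≤ |α - p / q| := by
  obtain ⟨N, hN⟩ := eventually_atTop.1 h
  have hlog : Tendsto (fun q : ℕ ↦ Real.log q) atTop atTop :=
    Real.tendsto_log_atTop.comp tendsto_natCast_atTop_atTop
  filter_upwards [hlog.eventually_ge_atTop (9.685 * N),
    hlog.eventually_ge_atTop (100 / (κ - 5.4524)), eventually_ge_atTop 1] with q h1 h2 h3 p
  have hq : (1:ℝ) ≤ q := by exact_mod_cast h3
  have hq0 : (0:ℝ) < q := by linarith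
  have hlq : 0 ≤ Real.log q := Real.log_nonneg hq
  rw [div_le_iff₀ (by linarith)] at h2
  have hl30 : Real.log (30 * q) = Real.log 30 + Real.log q := Real.log_mul (by norm_num) hq0.ne'
  have h30 : Real.log 30 ≤ 4 := by
    rw [Real.log_le_iff_le_exp (by norm_num), show (4:ℝ) = (4:ℕ) * 1 by norm_num, Real.exp_nat_mul]
    refine le_trans ?_ (pow_le_pow_left₀ (by norm_num) Real.exp_one_gt_d9.le 4)
    norm_num
  have h30' : 0 ≤ Real.log 30 := Real.log_nonneg (by norm_num)
  set n := ⌊Real.log (30 * q) / 9.685⌋₊ + 1 with hn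
  have n1 : Real.log (30 * q) < 9.685 * n := by
    have := Nat.lt_floor_add_one (Real.log (30 * q) / 9.685)
    rw [div_lt_iff₀ (by norm_num)] at this
    rw [hn]; push_cast; linarith
  have n2 : 9.685 * (n:ℝ) ≤ Real.log (30 * q) + 9.685 := by
    have := Nat.floor_le (a := Real.log (30 * q) / 9.685) (by rw [hl30]; positivity)
    rw [le_div_iff₀ (by norm_num)] at this
    rw [hn]; push_cast; linarith
  have hnN : N ≤ n := by
    have : (N:ℝ) ≤ n := by linarith
    exact_mod_cast this
  obtain ⟨a, B, hD0, hD1, ha1, ha2⟩ := hN n hnN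
  have hqD : q * |(a:ℝ) * α + B| < 1 / 2 := by
    have e : 30 * (q:ℝ) < Real.exp (9.685 * n) := by
      rwa [← Real.log_lt_iff_lt_exp (by positivity)]
    have e2 : Real.exp (9.685 * n) * Real.exp (-9.685 * n) = 1 := by
      rw [← Real.exp_add]; simp
    have e3 := mul_lt_mul_of_pos_right e (Real.exp_pos (-9.685 * n))
    have e4 := mul_le_mul_of_nonneg_left hD1 hq0.le
    linarith
  have hrp : (q:ℝ) ^ (-κ) = Real.exp (-κ * Real.log q) := by
    rw [Real.rpow_def_of_pos hq0, mul_comm]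
  rw [hrp]
  by_cases hΔ : a * p + B * q = 0
  · have ha : a ≠ 0 := by
      rintro rfl
      have : B = 0 := by
        have h3' : q ≠ 0 := by omega
        simpa [h3'] using hΔ
      simp [this] at hD0
    have haR : 0 < |(a:ℝ)| := by positivity
    have hΔ' : (a:ℝ) * p + B * q = 0 := by exact_mod_cast hΔ
    have e : |(a:ℝ)| * |α - p / q| = |(a:ℝ) * α + B| := by
      rw [← abs_mul]
      congr 1
      field_simp
      linear_combination -hΔ'
    rw [← e] at ha2
    refine le_trans ?_ (le_of_mul_le_mul_left ha2 haR)
    have e9 : Real.exp (-9) ≤ 0.0003 := by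
      rw [show (-9:ℝ) = -((9:ℕ)/(1:ℕ):ℝ) by norm_num]
      apply ir_exp_lo _ (by norm_num) _ _ (by norm_num)
      norm_num
    calc Real.exp (-κ * Real.log q) ≤ Real.exp (-9 + -52.74 * n) := by
          apply Real.exp_le_exp.2
          nlinarith
      _ ≤ _ := by rw [Real.exp_add]; gcongr
  · have hΔ' : (1:ℝ) ≤ |(a:ℝ) * p + B * q| := by
      have := Int.one_le_abs hΔ
      exact_mod_cast this
    have e1 : (a:ℝ) * p + B * q = q * (a * α + B) - a * (q * (α - p / q)) := by
      field_simp; ring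
    have e2 : 1 / 2 ≤ |(a:ℝ)| * (q * |α - p / q|) := by
      rw [e1] at hΔ'
      have := abs_sub (q * (a * α + B)) (a * (q * (α - p / q)))
      rw [abs_mul, abs_mul (a:ℝ), abs_mul (q:ℝ), abs_of_pos hq0] at this
      linarith
    have e3 : 1 / 2 ≤ Real.exp (43.035 * n) * (q * |α - p / q|) := by
      refine e2.trans ?_
      gcongr
    have e4 : Real.exp (-1) ≤ 1 / 2 := by
      rw [show (-1:ℝ) = -((1:ℕ)/(1:ℕ):ℝ) by norm_num]
      apply ir_exp_lo _ (by norm_num) _ _ (by norm_num)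
      norm_num
    have e5 : (q:ℝ) = Real.exp (Real.log q) := (Real.exp_log hq0).symm
    have e6 : Real.exp (43.035 * n) * q * Real.exp (-κ * Real.log q) ≤ Real.exp (-1) := by
      nth_rewrite 1 [e5]
      rw [← Real.exp_add, ← Real.exp_add]
      apply Real.exp_le_exp.2
      nlinarith
    have h0 : 0 < Real.exp (43.035 * n) * q := by positivity
    apply le_of_mul_le_mul_left _ h0
    linarith

theorem irrationality_measure_alpha_3 :
    ∀ κ : ℝ, κ > 5.45249 →
      {pq : ℤ × ℕ+ |
        |Real.sqrt 15 * Real.log ((Real.sqrt 15 - 1) / (Real.sqrt 15 + 1)) -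
            (pq.1 : ℝ) / ((pq.2 : ℕ) : ℝ)| <
          ((pq.2 : ℕ) : ℝ) ^ (-κ)}.Finite := by
  intro κ hκ
  rw [ir_alpha]
  obtain ⟨Q, hQ⟩ := eventually_atTop.1 (ir_lower _ ir_approx κ hκ)
  set α := -15 * irT 0 1
  obtain ⟨M, hM⟩ := exists_nat_ge ((|α| + 1) * Q)
  have hfin : ((Set.Icc (-(M:ℤ)) M) ×ˢ (Set.Iic (Q.succPNat))).Finite :=
    (Set.finite_Icc _ _).prod (Set.finite_Iic _)
  apply hfin.subset
  rintro ⟨p, q⟩ hpq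
  simp only [Set.mem_ofPred_eq] at hpq
  have hqQ : (q:ℕ) < Q := by
    by_contra hc
    exact absurd (hQ q (not_lt.1 hc) p) (not_le.2 hpq)
  have hq : (1:ℝ) ≤ ((q:ℕ):ℝ) := by exact_mod_cast q.pos
  have hq0 : (0:ℝ) < ((q:ℕ):ℝ) := by linarith
  have hqQ' : ((q:ℕ):ℝ) ≤ Q := by exact_mod_cast hqQ.le
  have h1 : ((q:ℕ):ℝ) ^ (-κ) ≤ 1 := Real.rpow_le_one_of_one_le_of_nonpos hq (by linarith)
  have h2 : |(p:ℝ) / ((q:ℕ):ℝ)| ≤ |α| + 1 := by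
    have := abs_sub_abs_le_abs_sub ((p:ℝ) / ((q:ℕ):ℝ)) α
    rw [abs_sub_comm] at this
    linarith
  rw [abs_div, abs_of_pos hq0, div_le_iff₀ hq0] at h2
  have h3 : |(p:ℝ)| ≤ M := by
    refine h2.trans (le_trans ?_ hM)
    gcongr
  have h4 : |p| ≤ (M:ℤ) := by exact_mod_cast h3
  refine ⟨Set.mem_Icc.2 (abs_le.1 h4), Set.mem_Iic.2 ?_⟩
  rw [← PNat.coe_le_coe]
  simp
  omega
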